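/- Every signed planar graph (G, σ) contains a matching M such that the Alon–Tarsi number of (G − M, σ) is at most 4, i.e., the signed graph polynomial P_{G−M,σ} has a non-vanishing monomial with all exponents at most 3. -/

import Mathlib

open MvPolynomial Finset

/- The graph polynomial `P_G = ∏_{uv ∈ E(G), u < v} (x_v - x_u)`. -/
open scoped Classical in
noncomputable def graphPoly {V : Type*} [Fintype V] [LinearOrder V]
    (G : SimpleGraph V) : MvPolynomial V ℝ :=
  ∏ p ∈ Finset.univ.filter (fun p : V × V => G.Adj p.1 p.2 ∧ p.1 < p.2),
    (X p.2 - X p.1)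

/- The signed graph polynomial `P_{G,σ} = ∏_{uv ∈ E(G), u < v} (x_v - σ(uv)·x_u)`. -/
open scoped Classical in
noncomputable def signedGraphPoly {V : Type*} [Fintype V] [LinearOrder V]
    (G : SimpleGraph V) (σ : Sym2 V → ℤ) : MvPolynomial V ℤ :=
  ∏ p ∈ Finset.univ.filter (fun p : V × V => G.Adj p.1 p.2 ∧ p.1 < p.2),
    (X p.2 - C (σ s(p.1, p.2)) * X p.1)

/- `H` is a minor of `G`: branch sets. -/
def SimpleGraph.IsMinor {W V : Type*} (H : SimpleGraph W) (G : SimpleGraph V) : Prop :=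
  ∃ f : W → Set V,
    (∀ w, (G.induce (f w)).Connected) ∧
    (∀ w₁ w₂, w₁ ≠ w₂ → Disjoint (f w₁) (f w₂)) ∧
    (∀ w₁ w₂, H.Adj w₁ w₂ → ∃ v₁ ∈ f w₁, ∃ v₂ ∈ f w₂, G.Adj v₁ v₂)

/- A graph is planar iff it has no `K₅` and no `K₃,₃` minor (Wagner's theorem). -/
def SimpleGraph.IsPlanar {V : Type*} (G : SimpleGraph V) : Prop :=
  ¬ SimpleGraph.IsMinor (completeGraph (Fin 5)) G ∧
  ¬ SimpleGraph.IsMinor (completeBipartiteGraph (Fin 3) (Fin 3)) G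

/-!
Following Thomassen's list-colouring argument, one proves by induction a statement about a planar
graph `G[W]` with a boundary `B` and at most two root vertices `R ⊆ B`. Instead of a drawing with
`B` on the outer face, one asks that the cone over `B`, an apex joined to all of `B`, be planar. The
roots get exponent `0`, the other boundary vertices at most `2`, and even at most `1` if they are
matched, so that there is room for the edges which are added back later.

If at most two boundary vertices separate `W`, the two sides are solved separately, the separating
vertices serving as the roots of one side. Otherwise, unless all of `B` is roots, the excluded
minors `K₅` and `K₃,₃` of the cone provide a boundary vertex `v ∉ R` with at most two neighbours on
the boundary, at most one of them outside `R`. Delete `v`, and let its other neighbours join the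
boundary. When `v` is put back, each of its edges raises the exponent of the neighbour or, if that
neighbour was on the boundary before, the exponent of `v`. Should the resulting monomial cancel,
there is another one in which some new boundary vertex `z` absorbs one more: this is possible if `z`
is matched, and otherwise putting the edge `vz` into the matching makes room for it.
-/

namespace SignedGraph

open SimpleGraph

/-! ### Reachability and connected vertex sets -/

section Reachability

variable {V : Type*} {H H' : SimpleGraph V} {D E : Set V} {x y z : V}

/-- The subgraph of `H` induced on `D`, regarded as a graph on the whole vertex type (with the
vertices outside `D` isolated), so that reachability inside `D` is `(restrict H D).Reachable`. -/
def restrict (H : SimpleGraph V) (D : Set V) : SimpleGraph V := (H.induce D).spanningCoe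

@[simp]
lemma restrict_adj : (restrict H D).Adj x y ↔ x ∈ D ∧ y ∈ D ∧ H.Adj x y := by
  simp only [restrict, map_adj, comap_adj, Function.Embedding.subtype_apply]
  constructor
  · rintro ⟨a, b, h, rfl, rfl⟩
    exact ⟨a.2, b.2, h⟩
  · rintro ⟨hx, hy, h⟩
    exact ⟨⟨x, hx⟩, ⟨y, hy⟩, h, rfl, rfl⟩

lemma restrict_mono (hH : H ≤ H') (hDE : D ⊆ E) : restrict H D ≤ restrict H' E :=
  fun _ _ h ↦ by
    rw [restrict_adj] at h ⊢
    exact ⟨hDE h.1, hDE h.2.1, hH h.2.2⟩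

lemma mem_of_reachable {A : Set V} (h : H.Reachable x y) (hx : x ∈ A)
    (hA : ∀ p ∈ A, ∀ q, H.Adj p q → q ∈ A) : y ∈ A := by
  rw [reachable_iff_reflTransGen] at h
  induction h with
  | refl => exact hx
  | tail _ hbc ih => exact hA _ ih _ hbc

lemma exists_adj_of_reachable {A : Set V} (h : H.Reachable x y) (hx : x ∈ A) (hy : y ∉ A) :
    ∃ p ∈ A, ∃ q ∉ A, H.Adj p q := by
  by_contra! hA
  exact hy (mem_of_reachable h hx fun p hp q hpq ↦ by_contra fun hq ↦ hA p hp q hq hpq)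

/-- The connected component of `x` inside `D`, as a set of vertices (`{x}` if `x ∉ D`). -/
def comp (H : SimpleGraph V) (D : Set V) (x : V) : Set V := {y | (restrict H D).Reachable x y}

lemma mem_comp_self : x ∈ comp H D x := Reachable.refl x

lemma comp_subset (hx : x ∈ D) : comp H D x ⊆ D :=
  fun _ hy ↦ mem_of_reachable hy hx fun _ _ _ h ↦ (restrict_adj.1 h).2.1

lemma mem_comp_of_adj (hx : x ∈ D) (hy : y ∈ comp H D x) (hz : z ∈ D) (h : H.Adj y z) :
    z ∈ comp H D x :=
  Reachable.trans hy (restrict_adj.2 ⟨comp_subset hx hy, hz, h⟩).reachable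

lemma connected_induce_of_reachable (hx : x ∈ D)
    (h : ∀ y ∈ D, (restrict H D).Reachable x y) : (H.induce D).Connected := by
  rw [connected_iff_exists_forall_reachable]
  refine ⟨⟨x, hx⟩, ?_⟩
  rintro ⟨y, hy⟩
  have hxy := h y hy
  rw [reachable_iff_reflTransGen] at hxy
  induction hxy with
  | refl => exact Reachable.refl _
  | tail _ hbc ih =>
    obtain ⟨hb, _, hbc⟩ := restrict_adj.1 hbc
    exact (ih hb).trans (Adj.reachable (induce_adj.2 hbc))

lemma reachable_of_connected_induce (h : (H.induce D).Connected) (hx : x ∈ D) (hy : y ∈ D) :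
    (restrict H D).Reachable x y :=
  (h.preconnected ⟨x, hx⟩ ⟨y, hy⟩).map (Embedding.spanningCoe (H.induce D)).toHom

lemma connected_induce_comp (hx : x ∈ D) : (H.induce (comp H D x)).Connected := by
  refine connected_induce_of_reachable mem_comp_self fun y hy ↦ ?_
  refine (mem_of_reachable (A := {z | z ∈ comp H D x ∧
    (restrict H (comp H D x)).Reachable x z}) hy ⟨mem_comp_self, Reachable.refl x⟩ ?_).2
  rintro p ⟨hp, hxp⟩ q hpq
  have hq := mem_comp_of_adj hx hp (restrict_adj.1 hpq).2.1 (restrict_adj.1 hpq).2.2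
  exact ⟨hq, hxp.trans (restrict_adj.2 ⟨hp, hq, (restrict_adj.1 hpq).2.2⟩).reachable⟩

lemma connected_induce_singleton (x : V) : (H.induce {x}).Connected where
  preconnected := .of_subsingleton

lemma connected_induce_insert (hD : (H.induce D).Connected) (hy : y ∈ D) (h : H.Adj x y) :
    (H.induce (insert x D)).Connected := by
  refine connected_induce_of_reachable (Set.mem_insert x D) fun z hz ↦ ?_
  rcases hz with rfl | hz
  · exact Reachable.refl _
  · exact (restrict_adj.2 ⟨Set.mem_insert _ _, Set.mem_insert_of_mem _ hy, h⟩).reachable.trans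
      ((reachable_of_connected_induce hD hy hz).mono
        (restrict_mono le_rfl (Set.subset_insert _ _)))

end Reachability

/-! ### Transferring planarity -/

section Planarity

variable {U V T : Type*} {G : SimpleGraph U} {H : SimpleGraph V} {K : SimpleGraph T}

/-- A model of `G` as a minor of `H`, with branch sets `φ x`. Nothing is required of the isolated
vertices of `G`. -/
structure BranchModel (G : SimpleGraph U) (H : SimpleGraph V) (φ : U → Set V) : Prop where
  connected : ∀ x ∈ G.support, (H.induce (φ x)).Connected
  disjoint : G.support.PairwiseDisjoint φ
  adj : ∀ x y, G.Adj x y → ∃ p ∈ φ x, ∃ q ∈ φ y, H.Adj p q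

namespace BranchModel

variable {φ : U → Set V} {s : Set U}

lemma connected_biUnion (hφ : BranchModel G H φ) (hs : (G.induce s).Connected)
    (hsG : s ⊆ G.support) : (H.induce (⋃ x ∈ s, φ x)).Connected := by
  have reachable_branch {x : U} (hx : x ∈ s) {p q : V} (hp : p ∈ φ x) (hq : q ∈ φ x) :
      (restrict H (⋃ x ∈ s, φ x)).Reachable p q :=
    (reachable_of_connected_induce (hφ.connected x (hsG hx)) hp hq).mono
      (restrict_mono le_rfl (Set.subset_biUnion_of_mem (u := φ) hx))
  obtain ⟨⟨x, hx⟩⟩ := hs.nonempty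
  obtain ⟨⟨p, hp⟩⟩ := (hφ.connected x (hsG hx)).nonempty
  refine connected_induce_of_reachable (Set.mem_biUnion hx hp) fun q hq ↦ ?_
  obtain ⟨y, hy, hq⟩ := Set.mem_iUnion₂.1 hq
  refine mem_of_reachable (A := {y | ∀ q ∈ φ y, (restrict H (⋃ x ∈ s, φ x)).Reachable p q})
    (reachable_of_connected_induce hs hx hy) (fun q hq ↦ reachable_branch hx hp hq) ?_ q hq
  intro a ha b hab q hq
  obtain ⟨has, hbs, hab⟩ := restrict_adj.1 hab
  obtain ⟨c, hc, d, hd, hcd⟩ := hφ.adj a b hab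
  exact ((ha c hc).trans (restrict_adj.2 ⟨Set.mem_biUnion has hc, Set.mem_biUnion hbs hd,
    hcd⟩).reachable).trans (reachable_branch hbs hd hq)

lemma isMinor (hφ : BranchModel G H φ) (hK : K.support = Set.univ) (hKG : K.IsMinor G) :
    K.IsMinor H := by
  obtain ⟨f, hconn, hdisj, hadj⟩ := hKG
  have hsupport (w : T) : f w ⊆ G.support := by
    intro x hx
    obtain ⟨w', hw⟩ : w ∈ K.support := hK ▸ Set.mem_univ w
    obtain ⟨y, hy, z, -, hyz⟩ := hadj w w' hw
    exact mem_of_reachable (reachable_of_connected_induce (hconn w) hy hx) hyz.left_mem_support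
      fun _ _ _ h ↦ (restrict_adj.1 h).2.2.right_mem_support
  refine ⟨fun w ↦ ⋃ x ∈ f w, φ x, fun w ↦ hφ.connected_biUnion (hconn w) (hsupport w), ?_, ?_⟩
  · intro w w' hw
    simp only [Set.disjoint_iUnion_left, Set.disjoint_iUnion_right]
    exact fun y hy x hx ↦ hφ.disjoint (hsupport w hx) (hsupport w' hy)
      ((hdisj w w' hw).ne_of_mem hx hy)
  · intro w w' hw
    obtain ⟨x, hx, y, hy, hxy⟩ := hadj w w' hw
    obtain ⟨p, hp, q, hq, hpq⟩ := hφ.adj x y hxy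
    exact ⟨p, Set.mem_biUnion hx hp, q, Set.mem_biUnion hy hq, hpq⟩

lemma isPlanar (hφ : BranchModel G H φ) (hH : H.IsPlanar) : G.IsPlanar := by
  refine ⟨fun h ↦ hH.1 (hφ.isMinor (Set.eq_univ_of_forall fun i ↦ ?_) h),
    fun h ↦ hH.2 (hφ.isMinor (Set.eq_univ_of_forall ?_) h)⟩
  · exact ⟨i + 1, by revert i; simp⟩
  · rintro (i | i)
    · exact ⟨Sum.inr 0, by simp⟩
    · exact ⟨Sum.inl 0, by simp⟩

end BranchModel

end Planarity

/-! ### Cones -/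

section Cone

variable {V : Type*} {Γ Γ' : SimpleGraph V} {B B' K : Set V} {u v w : V}

/-- The cone over `Γ` with base `B`: a new vertex `none`, the apex, is joined to all vertices of
`B`. Planarity of the cone expresses that `Γ` can be drawn with `B` on the outer face. -/
def cone (Γ : SimpleGraph V) (B : Set V) : SimpleGraph (Option V) where
  Adj
    | some u, some v => Γ.Adj u v
    | none, some b => b ∈ B
    | some b, none => b ∈ B
    | none, none => False
  symm := ⟨by rintro (_ | u) (_ | v) h <;> first | exact h | exact SimpleGraph.Adj.symm h⟩
  loopless := ⟨by rintro (_ | u) h <;> first | exact h | exact Γ.irrefl h⟩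

@[simp] lemma cone_adj_some_some : (cone Γ B).Adj (some u) (some v) ↔ Γ.Adj u v := Iff.rfl

lemma connected_induce_image_some (hK : (Γ.induce K).Connected) :
    ((cone Γ B).induce (some '' K)).Connected := by
  obtain ⟨⟨x, hx⟩⟩ := hK.nonempty
  refine connected_induce_of_reachable (Set.mem_image_of_mem _ hx) ?_
  rintro _ ⟨y, hy, rfl⟩
  let f : restrict Γ K →g restrict (cone Γ B) (some '' K) :=
    ⟨some, fun h ↦ by simpa using h⟩
  exact (reachable_of_connected_induce hK hx hy).map f

lemma mem_support_or_mem_of_mem_support_cone (h : some v ∈ (cone Γ B).support) :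
    v ∈ Γ.support ∨ v ∈ B := by
  obtain ⟨_ | w, hw⟩ := h
  · exact Or.inr hw
  · exact Or.inl ⟨w, hw⟩

/-- Minors of a cone in which only the apex gets a new branch set. -/
lemma isPlanar_cone_of_apex {A : Set (Option V)} (h : (cone Γ B).IsPlanar) (hΓ : Γ' ≤ Γ)
    (hA : ((cone Γ B).induce A).Connected) (hΓA : ∀ v ∈ Γ'.support, some v ∉ A)
    (hBA : ∀ v ∈ B', some v ∉ A) (hadj : ∀ v ∈ B', ∃ a ∈ A, (cone Γ B).Adj a (some v)) :
    (cone Γ' B').IsPlanar := by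
  let φ : Option V → Set (Option V) := fun x ↦ x.elim A fun v ↦ {some v}
  have notMem_apex {v : V} (hv : some v ∈ (cone Γ' B').support) : some v ∉ A :=
    (mem_support_or_mem_of_mem_support_cone hv).elim (hΓA v) (hBA v)
  refine BranchModel.isPlanar (φ := φ) ⟨?_, ?_, ?_⟩ h
  · rintro (_ | v) -
    · exact hA
    · exact connected_induce_singleton _
  · rintro (_ | v) hv (_ | w) hw hvw
    · exact absurd rfl hvw
    · exact Set.disjoint_singleton_right.2 (notMem_apex hw)
    · exact Set.disjoint_singleton_left.2 (notMem_apex hv)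
    · exact Set.disjoint_singleton.2 hvw
  · rintro (_ | v) (_ | w) hvw
    · exact hvw.elim
    · obtain ⟨a, ha, haw⟩ := hadj w hvw
      exact ⟨a, ha, some w, rfl, haw⟩
    · obtain ⟨a, ha, hav⟩ := hadj v hvw
      exact ⟨some v, rfl, a, ha, hav.symm⟩
    · exact ⟨some v, rfl, some w, rfl, hΓ hvw⟩

lemma isPlanar_cone_mono (h : (cone Γ B).IsPlanar) (hΓ : Γ' ≤ Γ) (hB : B' ⊆ B) :
    (cone Γ' B').IsPlanar :=
  isPlanar_cone_of_apex h hΓ (connected_induce_singleton none) (by simp) (by simp)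
    fun _ hv ↦ ⟨none, rfl, hB hv⟩

lemma isPlanar_cone_empty (h : Γ.IsPlanar) : (cone Γ ∅).IsPlanar := by
  refine BranchModel.isPlanar (φ := fun x ↦ x.elim ∅ fun v ↦ {v}) ⟨?_, ?_, ?_⟩ h
  · rintro (_ | v) hv
    · obtain ⟨_ | w, hw⟩ := hv <;> exact hw.elim
    · exact connected_induce_singleton v
  · rintro (_ | v) - (_ | w) - hvw
    · exact absurd rfl hvw
    · exact Set.empty_disjoint _
    · exact Set.disjoint_empty _
    · exact Set.disjoint_singleton.2 fun h ↦ hvw (congr_arg some h)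
  · rintro (_ | v) (_ | w) hvw
    · exact hvw.elim
    · exact hvw.elim
    · exact hvw.elim
    · exact ⟨v, rfl, w, rfl, hvw⟩

lemma notMem_support_deleteIncidenceSet : v ∉ (Γ.deleteIncidenceSet v).support := by
  rintro ⟨w, hw⟩
  exact (Γ.deleteIncidenceSet_adj.1 hw).2.1 rfl

lemma isPlanar_cone_neighborSet (h : (cone Γ B).IsPlanar) :
    (cone (Γ.deleteIncidenceSet v) (Γ.neighborSet v)).IsPlanar := by
  refine isPlanar_cone_of_apex h (Γ.deleteIncidenceSet_le v)
    (connected_induce_singleton (some v)) ?_ ?_ fun w hw ↦ ⟨some v, rfl, hw⟩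
  · rintro w hw ⟨⟩
    exact notMem_support_deleteIncidenceSet hw
  · rintro w hw ⟨⟩
    exact Γ.irrefl hw

lemma isPlanar_cone_contract (h : (cone Γ B).IsPlanar) (hv : v ∈ B) :
    (cone (Γ.deleteIncidenceSet v) ((Γ.neighborSet v ∪ B) \ {v})).IsPlanar := by
  refine isPlanar_cone_of_apex (A := insert none {some v}) h (Γ.deleteIncidenceSet_le v)
    (connected_induce_insert (connected_induce_singleton _) rfl hv) ?_ ?_ ?_
  · rintro w hw (⟨⟨⟩⟩ | ⟨⟨⟩⟩)
    exact notMem_support_deleteIncidenceSet hw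
  · rintro w ⟨-, hw⟩ (⟨⟨⟩⟩ | ⟨⟨⟩⟩)
    exact hw rfl
  · rintro w ⟨hw | hw, -⟩
    · exact ⟨some v, Or.inr rfl, hw⟩
    · exact ⟨none, Or.inl rfl, hw⟩

lemma notMem_of_mem_support_cone_restrict_compl (huK : u ∉ K) (hwK : w ∉ K)
    (hv : some v ∈ (cone (restrict Γ Kᶜ ⊔ edge u w) (B \ K)).support) : v ∉ K := by
  rcases mem_support_or_mem_of_mem_support_cone hv with ⟨x, hx | hx⟩ | hv
  · exact (restrict_adj.1 hx).1
  · rcases ((edge_adj ..).1 hx).1 with ⟨rfl, -⟩ | ⟨rfl, -⟩ <;> assumption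
  · exact hv.2

/-- A connected set adjacent to two further vertices may be contracted to an edge between them. -/
lemma isPlanar_cone_restrict_compl_sup_edge (h : (cone Γ B).IsPlanar)
    (hK : (Γ.induce K).Connected) (huK : u ∉ K) (hwK : w ∉ K)
    (hu : (Γ.neighborSet u ∩ K).Nonempty) (hw : (Γ.neighborSet w ∩ K).Nonempty) :
    (cone (restrict Γ Kᶜ ⊔ edge u w) (B \ K)).IsPlanar := by
  let ψ : V → Set V := fun v ↦ {x | x = v ∨ v = u ∧ x ∈ K}
  let φ : Option V → Set (Option V) := fun x ↦ x.elim {none} fun v ↦ some '' ψ v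
  have self_mem (v : V) : v ∈ ψ v := Or.inl rfl
  have adj_edge : ∃ p ∈ some '' ψ u, ∃ q ∈ some '' ψ w, (cone Γ B).Adj p q := by
    obtain ⟨x, hwx, hx⟩ := hw
    exact ⟨some x, ⟨x, Or.inr ⟨rfl, hx⟩, rfl⟩, some w, ⟨w, self_mem w, rfl⟩, hwx.symm⟩
  refine BranchModel.isPlanar (φ := φ) ⟨?_, ?_, ?_⟩ h
  · rintro (_ | v) -
    · exact connected_induce_singleton _
    · apply connected_induce_image_some
      obtain ⟨x, hux, hx⟩ := hu
      by_cases hvu : v = u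
      · rw [show ψ v = insert u K by ext; simp only [ψ, hvu]; simp]
        exact connected_induce_insert hK hx hux
      · rw [show ψ v = {v} by ext; simp only [ψ, hvu]; simp]
        exact connected_induce_singleton v
  · rintro (_ | v) hv (_ | x) hx hvx
    · exact absurd rfl hvx
    · simp [φ, Function.onFun]
    · simp [φ, Function.onFun]
    · refine (Set.disjoint_image_iff (Option.some_injective V)).2 (Set.disjoint_left.2 ?_)
      have hv := notMem_of_mem_support_cone_restrict_compl huK hwK hv
      have hx := notMem_of_mem_support_cone_restrict_compl huK hwK hx
      rintro a (rfl | ⟨rfl, ha⟩) (rfl | ⟨rfl, ha'⟩) <;> contradiction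
  · rintro (_ | v) (_ | x) hvx
    · exact hvx.elim
    · exact ⟨none, rfl, some x, ⟨x, self_mem x, rfl⟩, hvx.1⟩
    · exact ⟨some v, ⟨v, self_mem v, rfl⟩, none, rfl, hvx.1⟩
    · rcases hvx with hvx | hvx
      · exact ⟨some v, ⟨v, self_mem v, rfl⟩, some x, ⟨x, self_mem x, rfl⟩,
          (restrict_adj.1 hvx).2.2⟩
      · rcases ((edge_adj ..).1 hvx).1 with ⟨rfl, rfl⟩ | ⟨rfl, rfl⟩
        · exact adj_edge
        · obtain ⟨p, hp, q, hq, hpq⟩ := adj_edge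
          exact ⟨q, hq, p, hp, hpq.symm⟩

/-! ### Forbidden rooted minors -/

/-- Together with the apex, the four branch sets form a `K₅` minor. -/
lemma not_isPlanar_cone_of_K4 {Y : Fin 4 → Set V} (hconn : ∀ i, (Γ.induce (Y i)).Connected)
    (hdisj : Pairwise (Function.onFun Disjoint Y))
    (hadj : ∀ i j, i ≠ j → ∃ x ∈ Y i, ∃ y ∈ Y j, Γ.Adj x y)
    (hB : ∀ i, (Y i ∩ B).Nonempty) : ¬ (cone Γ B).IsPlanar := by
  refine fun h ↦ h.1 ⟨Fin.cons {none} fun i ↦ some '' Y i, ?_, ?_, ?_⟩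
  · refine Fin.cases (connected_induce_singleton _) fun i ↦ ?_
    exact connected_induce_image_some (hconn i)
  · intro i j hij
    cases i using Fin.cases <;> cases j using Fin.cases
    · exact absurd rfl hij
    · simp
    · simp
    · exact (Set.disjoint_image_iff (Option.some_injective V)).2
        (hdisj fun h ↦ hij (congrArg Fin.succ h))
  · have apex (j : Fin 4) : ∃ q ∈ some '' Y j, (cone Γ B).Adj none q := by
      obtain ⟨x, hx, hxB⟩ := hB j
      exact ⟨some x, ⟨x, hx, rfl⟩, hxB⟩
    intro i j hij
    cases i using Fin.cases <;> cases j using Fin.cases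
    · exact absurd rfl hij.ne
    · exact ⟨none, rfl, apex _⟩
    · obtain ⟨q, hq, h⟩ := apex _
      exact ⟨q, hq, none, rfl, h.symm⟩
    · obtain ⟨x, hx, y, hy, hxy⟩ := hadj _ _ fun h ↦ hij.ne (congrArg Fin.succ h)
      exact ⟨some x, ⟨x, hx, rfl⟩, some y, ⟨y, hy, rfl⟩, hxy⟩

/-- The apex joins the side of `Y`, which gives a `K₃,₃` minor. -/
lemma not_isPlanar_cone_of_K23 {Y : Fin 2 → Set V} {Z : Fin 3 → Set V}
    (hY : ∀ i, (Γ.induce (Y i)).Connected) (hZ : ∀ i, (Γ.induce (Z i)).Connected)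
    (hYY : Pairwise (Function.onFun Disjoint Y)) (hZZ : Pairwise (Function.onFun Disjoint Z))
    (hYZ : ∀ i j, Disjoint (Y i) (Z j)) (hadj : ∀ i j, ∃ x ∈ Y i, ∃ y ∈ Z j, Γ.Adj x y)
    (hB : ∀ i, (Z i ∩ B).Nonempty) : ¬ (cone Γ B).IsPlanar := by
  have disjoint_some {s t : Set V} (h : Disjoint s t) : Disjoint (some '' s) (some '' t) :=
    (Set.disjoint_image_iff (Option.some_injective V)).2 h
  let Y' : Fin 3 → Set (Option V) := Fin.cons {none} fun i ↦ some '' Y i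
  have adj (i j : Fin 3) : ∃ x ∈ Y' i, ∃ y ∈ some '' Z j, (cone Γ B).Adj x y := by
    cases i using Fin.cases with
    | zero =>
      obtain ⟨y, hy, hyB⟩ := hB j
      exact ⟨none, rfl, some y, ⟨y, hy, rfl⟩, hyB⟩
    | succ i =>
      obtain ⟨x, hx, y, hy, hxy⟩ := hadj i j
      exact ⟨some x, ⟨x, hx, rfl⟩, some y, ⟨y, hy, rfl⟩, hxy⟩
  have disjoint_Y' (i j : Fin 3) : Disjoint (Y' i) (some '' Z j) := by
    cases i using Fin.cases with
    | zero => exact Set.disjoint_singleton_left.2 (by simp)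
    | succ i => exact disjoint_some (hYZ i j)
  refine fun h ↦ h.2 ⟨Sum.elim Y' fun i ↦ some '' Z i, ?_, ?_, ?_⟩
  · rintro (i | i)
    · cases i using Fin.cases
      · exact connected_induce_singleton _
      · exact connected_induce_image_some (hY _)
    · exact connected_induce_image_some (hZ i)
  · rintro (i | i) (j | j) hij
    · cases i using Fin.cases <;> cases j using Fin.cases
      · exact absurd rfl hij
      · simp [Y']
      · simp [Y']
      · exact disjoint_some (hYY fun h ↦ hij (congrArg (Sum.inl ∘ Fin.succ) h))
    · exact disjoint_Y' i j
    · exact (disjoint_Y' j i).symm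
    · exact disjoint_some (hZZ fun h ↦ hij (by rw [h]))
  · rintro (i | i) (j | j) hij
    · simp at hij
    · exact adj i j
    · obtain ⟨x, hx, y, hy, hxy⟩ := adj j i
      exact ⟨y, hy, x, hx, hxy.symm⟩
    · simp at hij

end Cone

section Attachments

variable {V : Type*} {Γ : SimpleGraph V} {B C D E X : Set V} {p q x y z : V}

lemma comp_eq_of_mem (h : y ∈ comp Γ D x) : comp Γ D y = comp Γ D x :=
  Set.ext fun _ ↦ ⟨fun hz ↦ Reachable.trans h hz, fun hz ↦ Reachable.trans (Reachable.symm h) hz⟩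

/-- A connection from `p` to `q` through `E` can be chosen to be an edge (`L = ∅`) or to run
through a single component `L` of `E`. -/
lemma exists_connector (hp : p ∉ E) (hq : q ∉ E) (hpq : p ≠ q) (hD : D ⊆ insert p (insert q E))
    (h : (restrict Γ D).Reachable p q) :
    ∃ L ⊆ E, (Γ.induce (insert p L)).Connected ∧ (∃ y ∈ insert p L, Γ.Adj y q) ∧
      ∀ z ∈ L, (∃ y ∈ comp Γ E z, Γ.Adj y p) ∧ ∃ y ∈ comp Γ E z, Γ.Adj y q := by
  let A : Set V := insert p {y | ∃ x ∈ E, Γ.Adj x p ∧ y ∈ comp Γ E x}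
  have hqA : q ∉ A := by
    rintro (rfl | ⟨x, hx, -, hqx⟩)
    · exact hpq rfl
    · exact hq (comp_subset hx hqx)
  obtain ⟨a, ha, b, hb, hab⟩ := exists_adj_of_reachable h (Set.mem_insert p _) hqA
  obtain ⟨-, hbD, hab⟩ := restrict_adj.1 hab
  obtain rfl : b = q := by
    rcases hD hbD with rfl | hbq | hbE
    · exact absurd (Set.mem_insert _ _) hb
    · exact hbq
    · refine absurd (Or.inr ?_) hb
      rcases ha with rfl | ⟨x, hx, hxp, hax⟩
      · exact ⟨b, hbE, hab.symm, mem_comp_self⟩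
      · exact ⟨x, hx, hxp, mem_comp_of_adj hx hax hbE hab⟩
  rcases ha with rfl | ⟨x, hx, hxp, hax⟩
  · refine ⟨∅, Set.empty_subset E, ?_, ⟨a, Set.mem_insert _ _, hab⟩, by simp⟩
    rw [insert_empty_eq]
    exact connected_induce_singleton a
  · refine ⟨comp Γ E x, comp_subset hx,
      connected_induce_insert (connected_induce_comp hx) mem_comp_self hxp.symm,
      ⟨a, Set.mem_insert_of_mem _ hax, hab⟩, fun z hz ↦ ?_⟩
    rw [comp_eq_of_mem hz]
    exact ⟨⟨x, mem_comp_self, hxp⟩, ⟨a, hax, hab⟩⟩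

lemma not_isPlanar_cone_of_two_hubs {c : Fin 3 → V} (hc : Function.Injective c)
    (hX : (Γ.induce X).Connected) (hE : (Γ.induce E).Connected) (hXE : Disjoint X E)
    (hcX : ∀ i, c i ∉ X) (hcE : ∀ i, c i ∉ E) (hcB : ∀ i, c i ∈ B)
    (hXc : ∀ i, ∃ x ∈ X, Γ.Adj x (c i)) (hEc : ∀ i, ∃ x ∈ E, Γ.Adj x (c i)) :
    ¬ (cone Γ B).IsPlanar := by
  refine not_isPlanar_cone_of_K23 (Y := ![X, E]) (Z := fun i ↦ {c i}) ?_
    (fun i ↦ connected_induce_singleton _) ?_ (fun i j hij ↦ by simpa using hc.ne hij) ?_ ?_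
    fun i ↦ ⟨c i, rfl, hcB i⟩
  · exact Fin.forall_fin_two.2 ⟨hX, hE⟩
  · simpa [Pairwise, Function.onFun, Fin.forall_fin_two] using ⟨hXE, hXE.symm⟩
  · simpa [Fin.forall_fin_two] using ⟨hcX, hcE⟩
  · simpa [Fin.forall_fin_two] using ⟨hXc, hEc⟩

lemma not_isPlanar_cone_of_hub_of_triangle {c : Fin 3 → V} {L : Fin 3 → Set V}
    (hX : (Γ.induce X).Connected) (hXB : (X ∩ B).Nonempty) (hcB : ∀ i, c i ∈ B)
    (hXc : ∀ i, ∃ x ∈ X, Γ.Adj x (c i)) (hL : ∀ i, (Γ.induce (insert (c i) (L i))).Connected)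
    (hLX : ∀ i, Disjoint X (insert (c i) (L i)))
    (hLL : ∀ i j, i ≠ j → Disjoint (insert (c i) (L i)) (insert (c j) (L j)))
    (hadj : ∀ i, ∃ y ∈ insert (c i) (L i), Γ.Adj y (c (i + 1))) : ¬ (cone Γ B).IsPlanar := by
  have adj_hub (i : Fin 3) : ∃ x ∈ X, ∃ y ∈ insert (c i) (L i), Γ.Adj x y := by
    obtain ⟨x, hx, hxc⟩ := hXc i
    exact ⟨x, hx, c i, Set.mem_insert _ _, hxc⟩
  refine not_isPlanar_cone_of_K4 (Y := Fin.cons X fun i ↦ insert (c i) (L i)) ?_ ?_ ?_ ?_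
  · exact Fin.cases hX hL
  · intro i j hij
    cases i using Fin.cases <;> cases j using Fin.cases
    · exact absurd rfl hij
    · exact hLX _
    · exact (hLX _).symm
    · exact hLL _ _ fun h ↦ hij (congrArg Fin.succ h)
  · intro i j hij
    cases i using Fin.cases <;> cases j using Fin.cases
    · exact absurd rfl hij
    · exact adj_hub _
    · obtain ⟨x, hx, y, hy, hxy⟩ := adj_hub _
      exact ⟨y, hy, x, hx, hxy.symm⟩
    · rename_i i j
      have hcases : j = i + 1 ∨ i = j + 1 := by
        have : i ≠ j := fun h ↦ hij (congrArg Fin.succ h)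
        clear * - this; decide +revert
      rcases hcases with rfl | rfl
      · obtain ⟨y, hy, h⟩ := hadj i
        exact ⟨y, hy, _, Set.mem_insert _ _, h⟩
      · obtain ⟨y, hy, h⟩ := hadj j
        exact ⟨_, Set.mem_insert _ _, y, hy, h.symm⟩
  · exact Fin.cases hXB fun i ↦ ⟨c i, Set.mem_insert _ _, hcB i⟩

/-- If some component of `C` without the three vertices is adjacent to all of them, there are two
hubs; otherwise the three connections between them are disjoint and form a triangle. -/
lemma not_isPlanar_cone_of_hub {c : Fin 3 → V} (hc : Function.Injective c)
    (hX : (Γ.induce X).Connected) (hXC : Disjoint X C) (hXB : (X ∩ B).Nonempty)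
    (hcC : ∀ i, c i ∈ C) (hcB : ∀ i, c i ∈ B) (hXc : ∀ i, ∃ x ∈ X, Γ.Adj x (c i))
    (hC : ∀ i j k, i ≠ k → j ≠ k → (restrict Γ (C \ {c k})).Reachable (c i) (c j)) :
    ¬ (cone Γ B).IsPlanar := by
  let E : Set V := C \ Set.range c
  have hXE : Disjoint X E := hXC.mono_right Set.sdiff_subset
  have hcE (i : Fin 3) : c i ∉ E := fun h ↦ h.2 ⟨i, rfl⟩
  have hcX (i : Fin 3) : c i ∉ X := fun h ↦ Set.disjoint_left.1 hXC h (hcC i)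
  by_cases tripod : ∃ x ∈ E, ∀ i, ∃ y ∈ comp Γ E x, Γ.Adj y (c i)
  · obtain ⟨x, hx, hxc⟩ := tripod
    exact not_isPlanar_cone_of_two_hubs hc hX (connected_induce_comp hx)
      (hXE.mono_right (comp_subset hx)) hcX (fun i h ↦ hcE i (comp_subset hx h)) hcB hXc hxc
  have exists_link (i : Fin 3) := by
    refine exists_connector (Γ := Γ) (D := C \ {c (i + 2)}) (hcE i) (hcE (i + 1))
      (hc.ne (by simp)) ?_ (hC i (i + 1) (i + 2) (by simp) (by simp))
    rintro a ⟨haC, ha⟩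
    by_cases har : a ∈ Set.range c
    · obtain ⟨j, rfl⟩ := har
      have hj : j ≠ i + 2 := fun h ↦ ha (congrArg c h)
      have hj : j = i ∨ j = i + 1 := by clear * - hj; decide +revert
      rcases hj with rfl | rfl <;> simp
    · exact Or.inr (Or.inr ⟨haC, har⟩)
  choose L hLE hL hadj hLc using exists_link
  have disjoint_L (i j : Fin 3) (hij : i ≠ j) : Disjoint (L i) (L j) := by
    refine Set.disjoint_left.2 fun z hzi hzj ↦ tripod ⟨z, hLE i hzi, fun k ↦ ?_⟩
    have hk : k = i ∨ k = i + 1 ∨ k = j ∨ k = j + 1 := by clear * - hij; decide +revert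
    rcases hk with rfl | rfl | rfl | rfl
    exacts [(hLc _ z hzi).1, (hLc _ z hzi).2, (hLc _ z hzj).1, (hLc _ z hzj).2]
  refine not_isPlanar_cone_of_hub_of_triangle hX hXB hcB hXc hL (fun i ↦ ?_) (fun i j hij ↦ ?_)
    hadj
  · exact Set.disjoint_insert_right.2 ⟨hcX i, hXE.mono_right (hLE i)⟩
  · refine Set.disjoint_insert_left.2 ⟨?_, Set.disjoint_insert_right.2 ⟨?_, disjoint_L i j hij⟩⟩
    · rintro (h | h)
      exacts [hij (hc h), hcE i (hLE j h)]
    · exact fun h ↦ hcE j (hLE i h)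

end Attachments

section Cycles

variable {V : Type*} [Finite V] {K : SimpleGraph V} {d e f : V}

lemma reachable_deleteIncidenceSet_of_isCycles (hK : K.IsCycles) (hef : K.Reachable e f)
    (he : e ≠ d) (hf : f ≠ d) : (K.deleteIncidenceSet d).Reachable e f := by
  set K' := K.deleteIncidenceSet d
  have adj_of_ne {a b : V} (hab : K.Adj a b) (ha : a ≠ d) (hb : b ≠ d) : K'.Adj a b :=
    (K.deleteIncidenceSet_adj).2 ⟨hab, ha, hb⟩
  have reachable_nbrs {p q : V} (hp : K.Adj d p) (hq : K.Adj d q) : K'.Reachable q p := by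
    by_contra h
    have hpq : p ≠ q := by
      rintro rfl
      exact h (Reachable.refl p)
    obtain ⟨a, ha, b, hb, hdel⟩ := exists_adj_of_reachable (A := insert d {y | K'.Reachable q y})
      (hK.reachable_deleteEdges hp) (Set.mem_insert _ _) (by simp [hp.ne', h])
    obtain ⟨hab, habp⟩ := (deleteEdges_adj ..).1 hdel
    obtain ⟨hbd, hqb⟩ : b ≠ d ∧ ¬ K'.Reachable q b := by simpa using hb
    rcases eq_or_ne a d with rfl | had
    · have hbp : p ≠ b := by
        rintro rfl
        exact habp rfl
      have hbq : b = q := (hK.existsUnique_ne_adj hp).unique ⟨hbp, hab⟩ ⟨hpq, hq⟩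
      exact hqb (hbq ▸ Reachable.refl b)
    · exact hqb ((ha.resolve_left had).trans (adj_of_ne hab had hbd).reachable)
  have exists_nbr {e f : V} (hef : K.Reachable e f) (he : e ≠ d) (h : ¬ K'.Reachable e f) :
      ∃ p, K'.Reachable e p ∧ K.Adj d p := by
    obtain ⟨a, ha, b, hb, hab⟩ := exists_adj_of_reachable (A := {y | K'.Reachable e y}) hef
      (Reachable.refl e) h
    have had : a ≠ d := mem_of_reachable (A := {y | y ≠ d}) ha he fun _ _ _ h ↦
      (K.deleteIncidenceSet_adj.1 h).2.2
    obtain rfl : b = d := by_contra fun hbd ↦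
      hb (Reachable.trans ha (adj_of_ne hab had hbd).reachable)
    exact ⟨a, ha, hab.symm⟩
  by_contra h
  obtain ⟨p, hep, hp⟩ := exists_nbr hef he h
  obtain ⟨q, hfq, hq⟩ := exists_nbr hef.symm hf fun h' ↦ h h'.symm
  exact h ((hep.trans (reachable_nbrs hq hp)).trans hfq.symm)

end Cycles

section LowDegree

variable {V : Type*} {Γ : SimpleGraph V} {W B R C : Set V} {b r : V}

/-- `W` stays connected after the deletion of at most two vertices of `B`. -/
def RobustlyConnected (Γ : SimpleGraph V) (W B : Set V) : Prop :=
  ∀ S ⊆ B, S.ncard ≤ 2 → ∀ x ∈ W \ S, ∀ y ∈ W \ S, (restrict Γ (W \ S)).Reachable x y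

lemma exists_injective_fin_three {S : Set V} (h : 2 < S.ncard) :
    ∃ c : Fin 3 → V, Function.Injective c ∧ ∀ i, c i ∈ S := by
  obtain ⟨T, hTS, hT⟩ := Set.exists_subset_card_eq h
  obtain ⟨x, y, z, hxy, hxz, hyz, rfl⟩ := Set.ncard_eq_three.1 hT
  refine ⟨![x, y, z], ?_, fun i ↦ hTS (by fin_cases i <;> simp)⟩
  simp [Function.Injective, Fin.forall_fin_succ, hxy, hxz, hyz, hxy.symm, hxz.symm, hyz.symm]

lemma ncard_neighborSet_inter_le_two (hP : (cone Γ B).IsPlanar) (hBW : B ⊆ W)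
    (hW : RobustlyConnected Γ W B) (hb : b ∈ B) : (Γ.neighborSet b ∩ B).ncard ≤ 2 := by
  by_contra! h
  obtain ⟨c, hc, hcN⟩ := exists_injective_fin_three h
  have hcb (i : Fin 3) : c i ≠ b := (hcN i).1.ne'
  refine not_isPlanar_cone_of_hub (X := {b}) (C := W \ {b}) hc (connected_induce_singleton b)
    (by simp) ⟨b, rfl, hb⟩ (fun i ↦ ⟨hBW (hcN i).2, hcb i⟩) (fun i ↦ (hcN i).2)
    (fun i ↦ ⟨b, rfl, (hcN i).1⟩) (fun i j k hik hjk ↦ ?_) hP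
  rw [Set.sdiff_sdiff, Set.singleton_union]
  refine hW {b, c k} (Set.insert_subset hb (Set.singleton_subset_iff.2 (hcN k).2))
    ((Set.ncard_insert_le _ _).trans (by simp)) _ ⟨hBW (hcN i).2, ?_⟩ _ ⟨hBW (hcN j).2, ?_⟩
  · simp [hcb i, hc.ne hik]
  · simp [hcb j, hc.ne hjk]

variable [Finite V]

lemma two_lt_ncard_attachments (hBW : B ⊆ W) (hW : RobustlyConnected Γ W B) (hCB : C ⊆ B)
    (hC : 2 < C.ncard) (hr : r ∈ W \ C) :
    2 < {c ∈ C | ∃ x ∈ comp Γ (W \ C) r, Γ.Adj x c}.ncard := by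
  set S := {c ∈ C | ∃ x ∈ comp Γ (W \ C) r, Γ.Adj x c}
  by_contra! hle
  obtain ⟨t, htC, htS⟩ := Set.exists_mem_notMem_of_ncard_lt_ncard (hle.trans_lt hC)
  have hrt := hW S (fun c hc ↦ hCB hc.1) hle r ⟨hr.1, fun h ↦ hr.2 h.1⟩ t ⟨hBW (hCB htC), htS⟩
  have htD : t ∈ comp Γ (W \ C) r := mem_of_reachable hrt mem_comp_self fun p hp q hpq ↦ by
    obtain ⟨-, ⟨hqW, hqS⟩, hpq⟩ := restrict_adj.1 hpq
    exact mem_comp_of_adj hr hp ⟨hqW, fun hqC ↦ hqS ⟨hqC, p, hp, hpq⟩⟩ hpq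
  exact (comp_subset hr htD).2 htC

lemma not_isPlanar_cone_of_isCycles (hBW : B ⊆ W) (hW : RobustlyConnected Γ W B) (hCB : C ⊆ B)
    (hconn : (Γ.induce C).Connected) (hC : 2 < C.ncard) (hcyc : (restrict Γ C).IsCycles)
    (hrB : r ∈ B) (hrC : r ∉ C) : ¬ (cone Γ B).IsPlanar := by
  have hr : r ∈ W \ C := ⟨hBW hrB, hrC⟩
  obtain ⟨c, hc, hcC⟩ := exists_injective_fin_three (two_lt_ncard_attachments hBW hW hCB hC hr)
  refine not_isPlanar_cone_of_hub (X := comp Γ (W \ C) r) hc (connected_induce_comp hr)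
    (Set.disjoint_sdiff_left.mono_left (comp_subset hr)) ⟨r, mem_comp_self, hrB⟩
    (fun i ↦ (hcC i).1) (fun i ↦ hCB (hcC i).1) (fun i ↦ (hcC i).2) fun i j k hik hjk ↦ ?_
  have hij := reachable_deleteIncidenceSet_of_isCycles hcyc
    (reachable_of_connected_induce hconn (hcC i).1 (hcC j).1) (hc.ne hik) (hc.ne hjk)
  refine hij.mono fun x y hxy ↦ ?_
  rw [deleteIncidenceSet_adj, restrict_adj] at hxy
  exact restrict_adj.2 ⟨⟨hxy.1.1, hxy.2.1⟩, ⟨hxy.1.2.1, hxy.2.2⟩, hxy.1.2.2⟩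

/-- Otherwise `B \ R` would induce disjoint cycles without further edges inside `B`, and a vertex
of `R` would be attached to one of these cycles at three places. -/
lemma exists_low_degree (hP : (cone Γ B).IsPlanar) (hBW : B ⊆ W) (hRB : R ⊆ B) (hR : R.Nonempty)
    (hBR : (B \ R).Nonempty) (hW : RobustlyConnected Γ W B) :
    ∃ v ∈ B \ R, (Γ.neighborSet v ∩ (B \ R)).ncard ≤ 1 ∧ (Γ.neighborSet v ∩ B).ncard ≤ 2 := by
  by_contra! hcon
  have degree_eq_two {v : V} (hv : v ∈ B \ R) : (Γ.neighborSet v ∩ (B \ R)).ncard = 2 := by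
    have hle := ncard_neighborSet_inter_le_two hP hBW hW hv.1
    have hsub := Set.ncard_le_ncard
      (Set.inter_subset_inter_right (Γ.neighborSet v) (Set.sdiff_subset : B \ R ⊆ B))
    have := mt (hcon v hv) hle.not_gt
    omega
  obtain ⟨b, hb⟩ := hBR
  obtain ⟨r, hr⟩ := hR
  set C := comp Γ (B \ R) b
  have hCBR : C ⊆ B \ R := comp_subset hb
  have neighborSet_restrict {x : V} (hx : x ∈ C) :
      (restrict Γ C).neighborSet x = Γ.neighborSet x ∩ (B \ R) := by
    ext y
    simp only [mem_neighborSet, restrict_adj, Set.mem_inter_iff]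
    exact ⟨fun h ↦ ⟨h.2.2, hCBR h.2.1⟩, fun h ↦ ⟨hx, mem_comp_of_adj hb hx h.2 h.1, h.1⟩⟩
  refine not_isPlanar_cone_of_isCycles hBW hW (hCBR.trans Set.sdiff_subset)
    (connected_induce_comp hb) ?_ ?_ (hRB hr) (fun h ↦ (hCBR h).2 hr) hP
  · calc 2 < ((restrict Γ C).neighborSet b).ncard + 1 := by
          rw [neighborSet_restrict mem_comp_self, degree_eq_two hb]; simp
      _ = (insert b ((restrict Γ C).neighborSet b)).ncard :=
          (Set.ncard_insert_of_notMem (by simp)).symm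
      _ ≤ C.ncard := Set.ncard_le_ncard
          (Set.insert_subset mem_comp_self fun y hy ↦ (restrict_adj.1 hy).2.1)
  · rintro x ⟨y, hxy⟩
    have hx : x ∈ C := (restrict_adj.1 hxy).1
    rw [neighborSet_restrict hx, degree_eq_two (hCBR hx)]

end LowDegree

/-! ### Coefficients of products -/

section Coefficients

variable {V R : Type*} [CommSemiring R] {F P : MvPolynomial V R} {μ ν : V →₀ ℕ} {v : V}

/-- The exponent vector of the monomial `∏ z ∈ s, X z`. -/
noncomputable def ones (s : Finset V) : V →₀ ℕ := ∑ z ∈ s, Finsupp.single z 1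

lemma ones_apply [DecidableEq V] (s : Finset V) (x : V) : ones s x = if x ∈ s then 1 else 0 := by
  simp [ones, Finsupp.finsetSum_apply, Finsupp.single_apply]

@[simp] lemma ones_singleton (z : V) : ones {z} = Finsupp.single z 1 := by simp [ones]

lemma coeff_eq_zero_of_notMem_vars (hv : v ∉ F.vars) (hν : ν v ≠ 0) : coeff ν F = 0 := by
  by_contra h
  exact hv ((mem_vars_iff_mem_support v).2 ⟨ν, mem_support_iff.2 h, Finsupp.mem_support_iff.2 hν⟩)

lemma prod_linear_eq_sum_monomial [DecidableEq V] (N : Finset V) (a b : V → R) (v : V) :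
    ∏ z ∈ N, (C (a z) * X v + C (b z) * X z) = ∑ T ∈ N.powerset,
      monomial (Finsupp.single v #T + ones (N \ T)) ((∏ z ∈ T, a z) * ∏ z ∈ N \ T, b z) := by
  rw [Finset.prod_add]
  refine Finset.sum_congr rfl fun T _ ↦ ?_
  have hv : ∏ z ∈ T, C (a z) * X v = monomial (Finsupp.single v #T) (∏ z ∈ T, a z) := by
    rw [Finset.prod_mul_distrib, Finset.prod_const, ← map_prod, X_pow_eq_monomial,
      C_mul_monomial, mul_one]
  have hz : ∏ z ∈ N \ T, C (b z) * X z = monomial (ones (N \ T)) (∏ z ∈ N \ T, b z) := by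
    rw [Finset.prod_mul_distrib, ← map_prod, ones, ← mul_one (∏ z ∈ N \ T, b z), ← C_mul_monomial,
      monomial_sum_one, mul_one]
    rfl
  rw [hv, hz, monomial_mul]

/-- The coefficient receives a contribution from every `T ⊆ N` with `#T = #Q`, obtained by
choosing `X v` in the factors indexed by `T`; the hypothesis leaves only the one from `Q`. -/
lemma coeff_mul_prod_linear_ne_zero [DecidableEq V] [NoZeroDivisors R] [Nontrivial R]
    {N Q : Finset V} {a b : V → R}
    (hF : v ∉ F.vars) (hvN : v ∉ N) (hQ : Q ⊆ N) (ha : ∀ z ∈ N, a z ≠ 0) (hb : ∀ z ∈ N, b z ≠ 0)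
    (hμv : μ v = 0) (hμ : coeff μ F ≠ 0)
    (hT : ∀ T ⊆ N, #T = #Q → T ≠ Q → ones (Q \ T) ≤ μ →
      coeff (μ - ones (Q \ T) + ones (T \ Q)) F = 0) :
    coeff (μ + ones (N \ Q) + Finsupp.single v #Q)
      (F * ∏ z ∈ N, (C (a z) * X v + C (b z) * X z)) ≠ 0 := by
  rw [prod_linear_eq_sum_monomial, Finset.mul_sum, coeff_sum, Finset.sum_eq_single Q]
  · rw [coeff_mul_monomial', if_pos (by rw [add_assoc, add_comm (ones _)]; exact le_add_self),
      add_assoc, add_comm (ones _), add_tsub_cancel_right]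
    exact mul_ne_zero hμ (mul_ne_zero (Finset.prod_ne_zero_iff.2 fun z hz ↦ ha z (hQ hz))
      (Finset.prod_ne_zero_iff.2 fun z hz ↦ hb z (Finset.sdiff_subset hz)))
  · intro T hTN hTQ
    rw [Finset.mem_powerset] at hTN
    rw [coeff_mul_monomial']
    split_ifs with hle
    · refine mul_eq_zero_of_left ?_ _
      have hvT : v ∉ N \ T := fun h ↦ hvN (Finset.mem_sdiff.1 h).1
      have hvQ : v ∉ N \ Q := fun h ↦ hvN (Finset.mem_sdiff.1 h).1
      have hle_v := hle v
      simp only [Finsupp.add_apply, Finsupp.single_eq_same, ones_apply, hvT, hvQ, hμv, if_false,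
        zero_add, add_zero] at hle_v
      obtain hlt | hcard := hle_v.lt_or_eq
      · refine coeff_eq_zero_of_notMem_vars hF ?_
        simp only [Finsupp.tsub_apply, Finsupp.add_apply, Finsupp.single_eq_same, ones_apply, hvT,
          hvQ, hμv, if_false]
        omega
      have hQT : ones (Q \ T) ≤ μ := fun x ↦ by
        have := hle x
        simp only [Finsupp.add_apply, Finsupp.single_apply, ones_apply] at this ⊢
        grind
      convert hT T hTN hcard hTQ hQT using 2
      ext x
      simp only [Finsupp.tsub_apply, Finsupp.add_apply, Finsupp.single_apply, ones_apply]
      grind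
    · rfl
  · exact fun h ↦ absurd (Finset.mem_powerset.2 hQ) h

/-- The variables of `F` cannot absorb any part of `ν`, and the degree of `P` leaves no room for
`P` to take more than `ν`. -/
lemma coeff_add_mul_ne_zero [NoZeroDivisors R] {n : ℕ} (hP : P.IsHomogeneous n)
    (hν : ∀ x ∈ F.vars, ν x = 0) (hμF : coeff μ F ≠ 0) (hνP : coeff ν P ≠ 0) :
    coeff (μ + ν) (F * P) ≠ 0 := by
  classical
  rw [coeff_mul, Finset.sum_eq_single (μ, ν)]
  · exact mul_ne_zero hμF hνP
  · rintro ⟨x, y⟩ hxy hne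
    rw [HasAntidiagonal.mem_antidiagonal] at hxy
    by_contra h
    have hxF : coeff x F ≠ 0 := left_ne_zero_of_mul h
    have hyP : coeff y P ≠ 0 := right_ne_zero_of_mul h
    have hxμ : x ≤ μ := fun i ↦ by
      by_cases hi : i ∈ F.vars
      · have := DFunLike.congr_fun hxy i
        simp only [Finsupp.add_apply, hν i hi] at this
        omega
      · rw [by_contra fun h ↦ hxF (coeff_eq_zero_of_notMem_vars hi h)]
        exact Nat.zero_le _
    have hνy : ν ≤ y := fun i ↦ by
      have := DFunLike.congr_fun hxy i
      have := hxμ i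
      simp only [Finsupp.add_apply] at *
      omega
    obtain rfl : ν = y := by
      have hdeg : y.degree = ν.degree := by
        have := (hP hyP).trans (hP hνP).symm
        simpa only [Pi.one_def, Finsupp.degree_eq_weight_one] using this
      rw [← add_tsub_cancel_of_le hνy, map_add, add_eq_left, Finsupp.degree_eq_zero_iff] at hdeg
      rw [← add_tsub_cancel_of_le hνy, hdeg, add_zero]
    exact hne (Prod.ext (add_right_cancel hxy) rfl)
  · exact fun h ↦ (h (HasAntidiagonal.mem_antidiagonal.2 rfl)).elim

end Coefficients

/-! ### The polynomial of a signed graph -/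

section Polynomial

variable {V : Type*} [Fintype V] [LinearOrder V] {σ : Sym2 V → ℤ} {H H₁ H₂ : SimpleGraph V}
  {N Q : Finset V} {μ : V →₀ ℕ} {v w : V}

lemma mem_support_of_mem_vars_signedGraphPoly (hv : v ∈ (signedGraphPoly H σ).vars) :
    v ∈ H.support := by
  classical
  obtain ⟨p, hp, hvp⟩ := Finset.mem_biUnion.1 (vars_prod _ hv)
  have hadj : H.Adj p.1 p.2 := (Finset.mem_filter.1 hp).2.1
  obtain hX | hX := Finset.mem_union.1 (vars_sub_subset _ hvp)
  · rw [vars_X, Finset.mem_singleton] at hX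
    exact hX ▸ ⟨_, hadj.symm⟩
  · have := vars_mul _ _ hX
    rw [vars_C, vars_X, Finset.empty_union, Finset.mem_singleton] at this
    exact this ▸ ⟨_, hadj⟩

lemma isHomogeneous_signedGraphPoly (H : SimpleGraph V) (σ : Sym2 V → ℤ) :
    ∃ n, (signedGraphPoly H σ).IsHomogeneous n :=
  ⟨_, IsHomogeneous.prod _ _ (fun _ ↦ 1) fun p _ ↦ (isHomogeneous_X _ _).sub <| by
    simpa only [zero_add] using (isHomogeneous_C V (σ s(p.1, p.2))).mul (isHomogeneous_X ℤ p.1)⟩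

lemma signedGraphPoly_sup (h : Disjoint H₁ H₂) :
    signedGraphPoly (H₁ ⊔ H₂) σ = signedGraphPoly H₁ σ * signedGraphPoly H₂ σ := by
  classical
  unfold signedGraphPoly
  rw [← Finset.prod_union]
  · refine Finset.prod_congr ?_ fun _ _ ↦ rfl
    ext p
    simp only [Finset.mem_filter, Finset.mem_univ, true_and, Finset.mem_union, sup_adj,
      or_and_right]
  · refine Finset.disjoint_filter.2 fun p _ h₁ h₂ ↦ ?_
    exact (disjoint_left.1 h _ _ h₁.1) h₂.1

lemma coeff_signedGraphPoly_sup_ne_zero {μ₁ μ₂ : V →₀ ℕ} (h : Disjoint H₁ H₂)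
    (hμ : ∀ x ∈ H₁.support, μ₂ x = 0) (h₁ : coeff μ₁ (signedGraphPoly H₁ σ) ≠ 0)
    (h₂ : coeff μ₂ (signedGraphPoly H₂ σ) ≠ 0) :
    coeff (μ₁ + μ₂) (signedGraphPoly (H₁ ⊔ H₂) σ) ≠ 0 := by
  obtain ⟨n, hn⟩ := isHomogeneous_signedGraphPoly H₂ σ
  rw [signedGraphPoly_sup h]
  exact coeff_add_mul_ne_zero hn
    (fun x hx ↦ hμ x (mem_support_of_mem_vars_signedGraphPoly hx)) h₁ h₂

open scoped Classical in
lemma prod_filter_incident {M : Type*} [CommMonoid M] (hN : ∀ z, z ∈ N ↔ H.Adj v z)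
    (f : V × V → M) :
    ∏ p with (H.Adj p.1 p.2 ∧ p.1 < p.2) ∧ (p.1 = v ∨ p.2 = v), f p =
      ∏ z ∈ N, f (if v < z then (v, z) else (z, v)) := by
  refine (Finset.prod_nbij (fun z ↦ if v < z then (v, z) else (z, v)) ?_ ?_ ?_ ?_).symm
  · intro z hz
    have hvz := (hN z).1 hz
    split_ifs with h
    · simp [hvz, h]
    · simp [hvz.symm, lt_of_le_of_ne (not_lt.1 h) hvz.ne']
  · intro z _ z' _ h
    grind
  · rintro ⟨x, y⟩ h
    simp only [Finset.mem_coe, Finset.mem_filter, Finset.mem_univ, true_and] at h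
    obtain ⟨⟨hxy, hlt⟩, rfl | rfl⟩ := h
    · exact ⟨y, (hN y).2 hxy, if_pos hlt⟩
    · exact ⟨x, (hN x).2 hxy.symm, if_neg hlt.asymm⟩
  · exact fun _ _ ↦ rfl

lemma signedGraphPoly_eq_mul_prod_neighbors (hσ : ∀ e ∈ H.edgeSet, σ e ≠ 0)
    (hN : ∀ z, z ∈ N ↔ H.Adj v z) : ∃ a b : V → ℤ, (∀ z ∈ N, a z ≠ 0) ∧ (∀ z ∈ N, b z ≠ 0) ∧
      signedGraphPoly H σ = signedGraphPoly (H.deleteIncidenceSet v) σ *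
        ∏ z ∈ N, (C (a z) * X v + C (b z) * X z) := by
  classical
  have hσN : ∀ z ∈ N, -σ s(v, z) ≠ 0 := fun z hz ↦ neg_ne_zero.2 (hσ _ ((hN z).1 hz))
  refine ⟨fun z ↦ if v < z then -σ s(v, z) else 1, fun z ↦ if v < z then 1 else -σ s(v, z),
    fun z hz ↦ ?_, fun z hz ↦ ?_, ?_⟩
  · dsimp only; split_ifs
    exacts [hσN z hz, one_ne_zero]
  · dsimp only; split_ifs
    exacts [one_ne_zero, hσN z hz]
  unfold signedGraphPoly
  rw [← Finset.prod_filter_not_mul_prod_filter _ (fun p : V × V ↦ p.1 = v ∨ p.2 = v),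
    Finset.filter_filter, Finset.filter_filter, prod_filter_incident hN]
  congr 1
  · refine Finset.prod_congr ?_ fun _ _ ↦ rfl
    ext p
    simp only [Finset.mem_filter, Finset.mem_univ, true_and, deleteIncidenceSet_adj]
    tauto
  · refine Finset.prod_congr rfl fun z _ ↦ ?_
    dsimp only
    split_ifs
    · simp only [map_neg, map_one]; ring
    · rw [Sym2.eq_swap]; simp only [map_neg, map_one]; ring

variable (hσ : ∀ e ∈ H.edgeSet, σ e ≠ 0) (hN : ∀ z, z ∈ N ↔ H.Adj v z) (hμv : μ v = 0)
  (hμ : coeff μ (signedGraphPoly (H.deleteIncidenceSet v) σ) ≠ 0)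

include hσ hN hμv hμ

lemma coeff_signedGraphPoly_ne_zero_of_forall (hQ : Q ⊆ N)
    (hT : ∀ T ⊆ N, #T = #Q → T ≠ Q → ones (Q \ T) ≤ μ →
      coeff (μ - ones (Q \ T) + ones (T \ Q)) (signedGraphPoly (H.deleteIncidenceSet v) σ) = 0) :
    coeff (μ + ones (N \ Q) + Finsupp.single v #Q) (signedGraphPoly H σ) ≠ 0 := by
  obtain ⟨a, b, ha, hb, hP⟩ := signedGraphPoly_eq_mul_prod_neighbors hσ hN
  rw [hP]
  refine coeff_mul_prod_linear_ne_zero (fun h ↦ ?_) (fun h ↦ H.irrefl ((hN v).1 h))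
    hQ ha hb hμv hμ hT
  exact notMem_support_deleteIncidenceSet (mem_support_of_mem_vars_signedGraphPoly h)

/-- Orient every edge at `v` towards its other endpoint, except the edges to `Q`, which are
oriented towards `v`. -/
lemma coeff_signedGraphPoly_ne_zero (hQ : Q ⊆ N) (hμQ : ∀ z ∈ Q, μ z = 0) :
    coeff (μ + ones (N \ Q) + Finsupp.single v #Q) (signedGraphPoly H σ) ≠ 0 := by
  refine coeff_signedGraphPoly_ne_zero_of_forall hσ hN hμv hμ hQ fun T _ hcard hTQ hle ↦ ?_
  obtain ⟨z, hzQ, hzT⟩ := Finset.not_subset.1 fun h ↦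
    hTQ (Finset.eq_of_subset_of_card_le h hcard.le).symm
  have := hle z
  rw [ones_apply, if_pos (Finset.mem_sdiff.2 ⟨hzQ, hzT⟩), hμQ z hzQ] at this
  omega

/-- The edge `vw` can also be oriented towards `v`, unless the resulting monomial is cancelled by
one of the second kind. -/
lemma coeff_signedGraphPoly_ne_zero_or (hQ : Q ⊆ N) (hμQ : ∀ z ∈ Q, μ z = 0)
    (hw : w ∈ N) (hwQ : w ∉ Q) :
    coeff (μ + ones (N \ insert w Q) + Finsupp.single v (#Q + 1)) (signedGraphPoly H σ) ≠ 0 ∨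
      μ w ≠ 0 ∧ ∃ z ∈ N \ insert w Q, coeff (μ - Finsupp.single w 1 + Finsupp.single z 1)
        (signedGraphPoly (H.deleteIncidenceSet v) σ) ≠ 0 := by
  refine or_iff_not_imp_right.2 fun hz ↦ ?_
  push Not at hz
  rw [← Finset.card_insert_of_notMem hwQ]
  refine coeff_signedGraphPoly_ne_zero_of_forall hσ hN hμv hμ
    (Finset.insert_subset hw hQ) fun T hT hcard hTQ hle ↦ ?_
  obtain ⟨x, hxQ, hxT⟩ := Finset.not_subset.1 fun h ↦
    hTQ (Finset.eq_of_subset_of_card_le h hcard.le).symm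
  have hone : ∀ y ∈ insert w Q \ T, y = w ∧ μ w ≠ 0 := fun y hy ↦ by
    have hμy := hle y
    rw [ones_apply, if_pos hy] at hμy
    obtain rfl | hyQ := Finset.mem_insert.1 (Finset.mem_sdiff.1 hy).1
    · exact ⟨rfl, by omega⟩
    · exact absurd (hμQ y hyQ) (by omega)
  obtain ⟨rfl, hμx⟩ := hone x (Finset.mem_sdiff.2 ⟨hxQ, hxT⟩)
  have hsdiff : insert x Q \ T = {x} := Finset.eq_singleton_iff_unique_mem.2
    ⟨Finset.mem_sdiff.2 ⟨hxQ, hxT⟩, fun y hy ↦ (hone y hy).1⟩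
  obtain ⟨z, hzT⟩ : ∃ z, T \ insert x Q = {z} := by
    rw [← Finset.card_eq_one, Finset.card_sdiff_comm hcard, hsdiff, Finset.card_singleton]
  rw [hsdiff, hzT, ones_singleton, ones_singleton]
  have hzmem : z ∈ T \ insert x Q := hzT ▸ Finset.mem_singleton_self z
  exact hz hμx z (Finset.sdiff_subset_sdiff hT le_rfl hzmem)

end Polynomial

/-! ### Certificates -/

section Certificates

variable {V : Type*} {G M M' : SimpleGraph V} {W B R K S : Set V} {v w x y z : V}

/-- The edges of `G[W]` that survive when the matching `M` and the edges inside the set `R` of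
roots are removed. -/
def remaining (G : SimpleGraph V) (W R : Set V) (M : SimpleGraph V) : SimpleGraph V :=
  restrict G W \ (restrict G R ⊔ M)

@[simp]
lemma remaining_adj : (remaining G W R M).Adj x y ↔
    x ∈ W ∧ y ∈ W ∧ G.Adj x y ∧ ¬(x ∈ R ∧ y ∈ R) ∧ ¬M.Adj x y := by
  simp only [remaining, sdiff_adj, restrict_adj, sup_adj]
  tauto

lemma remaining_le : remaining G W R M ≤ G := fun _ _ h ↦ (remaining_adj.1 h).2.2.1

lemma eq_of_adj_sup_edge (hM : ∀ x y z, M.Adj x y → M.Adj x z → y = z) (hv : v ∉ M.support)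
    (hw : w ∉ M.support) (hxy : (M ⊔ edge v w).Adj x y) (hxz : (M ⊔ edge v w).Adj x z) :
    y = z := by
  have := hM x y z
  have : ∀ u, M.Adj x u → x ≠ v ∧ x ≠ w := fun u hu ↦
    ⟨fun h ↦ hv ⟨u, h ▸ hu⟩, fun h ↦ hw ⟨u, h ▸ hu⟩⟩
  simp only [sup_adj, edge_adj] at hxy hxz
  grind

lemma deleteIncidenceSet_sup_edge :
    (M ⊔ edge v w).deleteIncidenceSet v = M.deleteIncidenceSet v := by
  ext x y
  simp only [deleteIncidenceSet_adj, sup_adj, edge_adj]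
  tauto

lemma deleteIncidenceSet_remaining (hM : M'.deleteIncidenceSet v = M.deleteIncidenceSet v) :
    (remaining G W R M').deleteIncidenceSet v = remaining G (W \ {v}) (R \ {v}) M := by
  ext x y
  have h : x ≠ v ∧ y ≠ v → (M'.Adj x y ↔ M.Adj x y) := fun h ↦ by
    simpa [deleteIncidenceSet_adj, h] using congr_arg (fun H ↦ H.Adj x y) hM
  simp only [deleteIncidenceSet_adj, remaining_adj, Set.mem_sdiff, Set.mem_singleton_iff]
  tauto

lemma remaining_sup {M₁ M₂ : SimpleGraph V} (hKW : K ⊆ W) (hSW : S ⊆ W) (hKS : Disjoint K S)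
    (hRK : Disjoint R K) (hK : ∀ x ∈ K, ∀ y ∈ W, G.Adj x y → y ∈ K ∪ S)
    (hM₁ : M₁ ≤ restrict G Kᶜ) (hM₂ : M₂ ≤ restrict G K) :
    remaining G W R (M₁ ⊔ M₂) = remaining G (W \ K) R M₁ ⊔ remaining G (K ∪ S) S M₂ := by
  ext x y
  have hM₁' : M₁.Adj x y → x ∉ K ∧ y ∉ K := fun h ↦
    ⟨(restrict_adj.1 (hM₁ h)).1, (restrict_adj.1 (hM₁ h)).2.1⟩
  have hM₂' : M₂.Adj x y → x ∈ K ∧ y ∈ K := fun h ↦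
    ⟨(restrict_adj.1 (hM₂ h)).1, (restrict_adj.1 (hM₂ h)).2.1⟩
  simp only [remaining_adj, sup_adj, Set.mem_sdiff, Set.mem_union, Set.disjoint_left,
    Set.subset_def] at *
  grind [G.adj_comm x y]

lemma disjoint_remaining {M₁ M₂ : SimpleGraph V} :
    Disjoint (remaining G (W \ K) R M₁) (remaining G (K ∪ S) S M₂) := by
  refine SimpleGraph.disjoint_left.2 fun x y h₁ h₂ ↦ ?_
  obtain ⟨hx, hy, -⟩ := remaining_adj.1 h₁
  obtain ⟨hx', hy', -, hS, -⟩ := remaining_adj.1 h₂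
  exact hS ⟨hx'.resolve_left hx.2, hy'.resolve_left hy.2⟩

variable [Fintype V] [LinearOrder V] {σ : Sym2 V → ℤ} {η η' : V →₀ ℕ}

/-- `M` and `η` certify the instance `(W, B, R)` of the induction: `M` is a matching of `G[W]`
(given as a graph) missing the roots `R`, and `η` is the exponent vector of a nonvanishing monomial
of the remaining graph, with value `0` at the roots, at most `3` everywhere, and at most `2` on the
boundary `B`, even at most `1` at the boundary vertices covered by `M`. -/
structure Certificate (G : SimpleGraph V) (σ : Sym2 V → ℤ) (W B R : Set V) (M : SimpleGraph V)
    (η : V →₀ ℕ) : Prop where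
  le : M ≤ restrict G (W \ R)
  eq_of_adj : ∀ x y z, M.Adj x y → M.Adj x z → y = z
  eq_zero : ∀ x ∉ W \ R, η x = 0
  le_three : ∀ x, η x ≤ 3
  le_two : ∀ x ∈ B, η x ≤ 2
  le_one : ∀ x ∈ B, x ∈ M.support → η x ≤ 1
  coeff_ne_zero : coeff η (signedGraphPoly (remaining G W R M) σ) ≠ 0

/-- The instance `(W, B, R)` has a certificate. -/
def Solvable (G : SimpleGraph V) (σ : Sym2 V → ℤ) (W B R : Set V) : Prop :=
  ∃ M η, Certificate G σ W B R M η

/-- The boundary after the deletion of `v`, to which the remaining neighbours of `v` are added. -/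
def newBoundary (G : SimpleGraph V) (W B : Set V) (v : V) : Set V :=
  ((restrict G W).neighborSet v ∪ B) \ {v}

/-- Only the neighbours of `v` that enter the boundary may see their exponent increased. -/
lemma Certificate.extend (h : Certificate G σ (W \ {v}) (newBoundary G W B v) (R \ {v}) M η)
    (hRB : R ⊆ B) (hvW : v ∈ W) (hM : M' ≤ restrict G (W \ R))
    (hM' : ∀ x y z, M'.Adj x y → M'.Adj x z → y = z)
    (hMB : ∀ x ∈ B \ {v}, x ∈ M'.support → x ∈ M.support)
    (hη : ∀ x ∉ (restrict G W).neighborSet v \ B, x ≠ v → η' x ≤ η x)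
    (hη₃ : ∀ x ∈ (restrict G W).neighborSet v \ B, η' x ≤ 3)
    (hv₂ : η' v ≤ 2) (hv₁ : v ∈ M'.support → η' v ≤ 1) (hv₀ : v ∈ R → η' v = 0)
    (hc : coeff η' (signedGraphPoly (remaining G W R M') σ) ≠ 0) :
    Certificate G σ W B R M' η' where
  le := hM
  eq_of_adj := hM'
  eq_zero x hx := by
    obtain rfl | hxv := eq_or_ne x v
    · exact hv₀ (by_contra fun h ↦ hx ⟨hvW, h⟩)
    refine Nat.le_zero.1 ((hη x (fun hxN ↦ hx ⟨?_, ?_⟩) hxv).trans_eq (h.eq_zero x ?_))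
    · exact (restrict_adj.1 hxN.1).2.1
    · exact fun hxR ↦ hxN.2 (hRB hxR)
    · exact fun h' ↦ hx ⟨h'.1.1, fun hxR ↦ h'.2 ⟨hxR, hxv⟩⟩
  le_three x := by
    obtain rfl | hxv := eq_or_ne x v
    · exact hv₂.trans (by norm_num)
    by_cases hx : x ∈ (restrict G W).neighborSet v \ B
    exacts [hη₃ x hx, (hη x hx hxv).trans (h.le_three x)]
  le_two x hx := by
    obtain rfl | hxv := eq_or_ne x v
    · exact hv₂
    · exact (hη x (fun h ↦ h.2 hx) hxv).trans (h.le_two x ⟨Or.inr hx, hxv⟩)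
  le_one x hx hxM := by
    obtain rfl | hxv := eq_or_ne x v
    · exact hv₁ hxM
    · exact (hη x (fun h ↦ h.2 hx) hxv).trans
        (h.le_one x ⟨Or.inr hx, hxv⟩ (hMB x ⟨hx, hxv⟩ hxM))
  coeff_ne_zero := hc

section Extension

variable (h : Certificate G σ (W \ {v}) (newBoundary G W B v) (R \ {v}) M η)

include h

lemma Certificate.notMem_support : v ∉ M.support :=
  fun ⟨_, hy⟩ ↦ (restrict_adj.1 (h.le hy)).1.1.2 rfl

lemma Certificate.apply_self : η v = 0 := h.eq_zero v fun h ↦ h.1.2 rfl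

lemma Certificate.le_restrict : M ≤ restrict G (W \ R) := by
  refine h.le.trans (restrict_mono le_rfl fun x hx ↦ ⟨hx.1.1, fun hxR ↦ hx.2 ⟨hxR, hx.1.2⟩⟩)

lemma Certificate.le_two_of_mem_neighborSet (hx : (restrict G W).Adj v x) : η x ≤ 2 :=
  h.le_two x ⟨Or.inl hx, hx.ne'⟩

lemma Certificate.coeff_deleteIncidenceSet_ne_zero
    (hM : M'.deleteIncidenceSet v = M.deleteIncidenceSet v) :
    coeff η (signedGraphPoly ((remaining G W R M').deleteIncidenceSet v) σ) ≠ 0 := by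
  rw [deleteIncidenceSet_remaining hM]
  exact h.coeff_ne_zero

lemma Certificate.extend_of_coeff (hRB : R ⊆ B) (hvW : v ∈ W)
    (hη : ∀ x ∉ (restrict G W).neighborSet v \ B, x ≠ v → η' x ≤ η x)
    (hη₃ : ∀ x ∈ (restrict G W).neighborSet v \ B, η' x ≤ 3)
    (hv₂ : η' v ≤ 2) (hv₀ : v ∈ R → η' v = 0)
    (hc : coeff η' (signedGraphPoly (remaining G W R M) σ) ≠ 0) :
    Certificate G σ W B R M η' :=
  h.extend hRB hvW h.le_restrict h.eq_of_adj (fun _ _ hx ↦ hx) hη hη₃ hv₂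
    (fun hv ↦ (h.notMem_support hv).elim) hv₀ hc

end Extension

lemma Solvable.of_delete_root (hσ : ∀ e ∈ G.edgeSet, σ e ≠ 0) (hvW : v ∈ W)
    (hvR : v ∈ R ∨ R = ∅) (h : Solvable G σ (W \ {v}) (newBoundary G W R v) (R \ {v})) :
    Solvable G σ W R R := by
  classical
  obtain ⟨M, η, h⟩ := h
  have hc := coeff_signedGraphPoly_ne_zero (N := {z | (remaining G W R M).Adj v z})
    (fun e he ↦ hσ e (edgeSet_mono remaining_le he)) (by simp) h.apply_self
    (h.coeff_deleteIncidenceSet_ne_zero rfl) (Finset.empty_subset _) (by simp)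
  have hηv := h.apply_self
  refine ⟨M, _, h.extend_of_coeff le_rfl hvW (fun x hx _ ↦ ?_) (fun x hx ↦ ?_) ?_ ?_ hc⟩
  · have hxN : ¬(remaining G W R M).Adj v x := fun hadj ↦ by
      obtain ⟨-, hxW, hvx, hvxR, -⟩ := remaining_adj.1 hadj
      refine hx ⟨restrict_adj.2 ⟨hvW, hxW, hvx⟩, fun hxR ↦ ?_⟩
      obtain hvR | rfl := hvR
      exacts [hvxR ⟨hvR, hxR⟩, hxR]
    simpa [ones_apply] using hxN
  · have := h.le_two_of_mem_neighborSet hx.1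
    simp only [Finsupp.add_apply, Finset.card_empty, Finsupp.single_zero, Finsupp.coe_zero,
      Pi.zero_apply, ones_apply]
    split_ifs <;> omega
  all_goals simp [ones_apply, hηv]

section DeleteVertex

variable (h : Certificate G σ (W \ {v}) (newBoundary G W B v) (R \ {v}) M η) {N Q : Finset V}
  (hN : ∀ x, x ∈ N ↔ (restrict G W).Adj v x) (hRB : R ⊆ B) (hvW : v ∈ W) (hvR : v ∉ R)

include h

lemma Certificate.remaining_adj_self (hvR : v ∉ R) :
    (remaining G W R M).Adj v x ↔ (restrict G W).Adj v x := by
  have : ¬M.Adj v x := fun hvx ↦ h.notMem_support ⟨_, hvx⟩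
  simp only [remaining_adj, restrict_adj]
  tauto

lemma Certificate.coeff_sub_single_ne_zero {N' : Finset V}
    (hσ : ∀ e ∈ G.edgeSet, σ e ≠ 0) (hN' : ∀ x, x ∈ N' ↔ (remaining G W R M').Adj v x)
    (hM : M'.deleteIncidenceSet v = M.deleteIncidenceSet v) (hQ : ∀ x ∈ Q, x ∈ N' ∧ x ∈ R)
    (hzv : z ≠ v) (hzR : z ∉ R)
    (hc : coeff (η - Finsupp.single w 1 + Finsupp.single z 1)
      (signedGraphPoly (remaining G (W \ {v}) (R \ {v}) M) σ) ≠ 0) :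
    coeff (η - Finsupp.single w 1 + Finsupp.single z 1 + ones (N' \ Q) + Finsupp.single v #Q)
      (signedGraphPoly (remaining G W R M') σ) ≠ 0 := by
  refine coeff_signedGraphPoly_ne_zero (fun e he ↦ hσ e (edgeSet_mono remaining_le he)) hN' ?_
    (by rwa [deleteIncidenceSet_remaining hM]) (fun x hx ↦ (hQ x hx).1) fun x hx ↦ ?_
  · simp [h.apply_self, hzv.symm]
  · have hηx : η x = 0 := h.eq_zero x fun hx' ↦ hx'.2 ⟨(hQ x hx).2, hx'.1.2⟩
    simp [hηx, (ne_of_mem_of_not_mem (hQ x hx).2 hzR).symm]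

include hN hRB hvW hvR

lemma Solvable.of_coeff_add_ones_add_single {k : ℕ} (hk : k ≤ 2) (hQ : ∀ x ∈ N, x ∈ B → x ∈ Q)
    (hc : coeff (η + ones (N \ Q) + Finsupp.single v k)
      (signedGraphPoly (remaining G W R M) σ) ≠ 0) : Solvable G σ W B R := by
  have hηv := h.apply_self
  have hvN : v ∉ N := fun hv ↦ ((hN v).1 hv).ne rfl
  refine ⟨M, _, h.extend_of_coeff hRB hvW (fun x hx hxv ↦ ?_) (fun x hx ↦ ?_) ?_
    (fun hv ↦ (hvR hv).elim) hc⟩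
  · have hxN : x ∈ N → x ∈ Q := fun hxN ↦
      hQ x hxN (by_contra fun hxB ↦ hx ⟨(hN x).1 hxN, hxB⟩)
    simp only [Finsupp.add_apply, Finsupp.single_apply, ones_apply]
    grind
  · have := h.le_two_of_mem_neighborSet hx.1
    have := ((hN x).2 hx.1)
    simp only [Finsupp.add_apply, Finsupp.single_apply, ones_apply]
    grind
  · simpa [ones_apply, hηv, hvN] using hk

variable (hσ : ∀ e ∈ G.edgeSet, σ e ≠ 0) (hQ : ∀ x, x ∈ Q ↔ x ∈ N ∧ x ∈ R)
  (hQw : ∀ x ∈ N, x ∈ B → x = w ∨ x ∈ Q) (hQ₁ : #Q ≤ 1)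
  (hz : z ∈ N) (hzB : z ∉ B) (hηw : η w ≠ 0)
  (hc : coeff (η - Finsupp.single w 1 + Finsupp.single z 1)
    (signedGraphPoly (remaining G (W \ {v}) (R \ {v}) M) σ) ≠ 0)

include hσ hQ hQw hQ₁ hz hzB hηw hc

lemma Solvable.of_coeff_sub_single_of_mem_support (hzM : z ∈ M.support) : Solvable G σ W B R := by
  have hηv := h.apply_self
  have hvN : v ∉ N := fun hv ↦ ((hN v).1 hv).ne rfl
  have hzv : z ≠ v := ne_of_mem_of_not_mem hz hvN
  have hηz : η z ≤ 1 := h.le_one z ⟨Or.inl ((hN z).1 hz), hzv⟩ hzM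
  have hc' := h.coeff_sub_single_ne_zero hσ (fun x ↦ (hN x).trans (h.remaining_adj_self hvR).symm)
    rfl (fun x hx ↦ (hQ x).1 hx) hzv (fun hzR ↦ hzB (hRB hzR)) hc
  refine ⟨M, _, h.extend_of_coeff hRB hvW (fun x hx hxv ↦ ?_) (fun x hx ↦ ?_) ?_
    (fun hv ↦ (hvR hv).elim) hc'⟩
  · have hxB : x ∈ N → x ∈ B := fun hxN ↦ by_contra fun hxB ↦ hx ⟨(hN x).1 hxN, hxB⟩
    simp only [Finsupp.add_apply, Finsupp.tsub_apply, Finsupp.single_apply, ones_apply]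
    grind
  · have := h.le_two_of_mem_neighborSet hx.1
    have := (hN x).2 hx.1
    simp only [Finsupp.add_apply, Finsupp.tsub_apply, Finsupp.single_apply, ones_apply]
    grind
  · simp only [Finsupp.add_apply, Finsupp.tsub_apply, Finsupp.single_apply, ones_apply]
    grind

/-- The edge `vz` joins the matching, which makes room for the larger exponent at `z`. -/
lemma Solvable.of_coeff_sub_single_of_notMem_support (hzM : z ∉ M.support) :
    Solvable G σ W B R := by
  have hηv := h.apply_self
  have hvN : v ∉ N := fun hv ↦ ((hN v).1 hv).ne rfl
  have hzv : z ≠ v := ne_of_mem_of_not_mem hz hvN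
  have hN' : ∀ x, x ∈ N.erase z ↔ (remaining G W R (M ⊔ edge v z)).Adj v x := fun x ↦ by
    rw [Finset.mem_erase, hN, ← h.remaining_adj_self hvR]
    simp only [remaining_adj, sup_adj, edge_adj]
    grind
  have hzNR : ∀ x ∈ Q, x ∈ N.erase z ∧ x ∈ R := fun x hx ↦ by
    obtain ⟨hxN, hxR⟩ := (hQ x).1 hx
    exact ⟨Finset.mem_erase.2 ⟨fun hxz ↦ hzB (hxz ▸ hRB hxR), hxN⟩, hxR⟩
  have hc' := h.coeff_sub_single_ne_zero hσ hN' deleteIncidenceSet_sup_edge hzNR hzv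
    (fun hzR ↦ hzB (hRB hzR)) hc
  refine ⟨M ⊔ edge v z, _, h.extend hRB hvW ?_
    (fun x y y' ↦ eq_of_adj_sup_edge h.eq_of_adj h.notMem_support hzM) (fun x hx ↦ ?_)
    (fun x hx hxv ↦ ?_) (fun x hx ↦ ?_) ?_ (fun _ ↦ ?_) (fun hv ↦ (hvR hv).elim) hc'⟩
  · obtain ⟨-, hzW, hvz⟩ := restrict_adj.1 ((hN z).1 hz)
    exact sup_le h.le_restrict ((edge_le_iff _).2
      (Or.inr (restrict_adj.2 ⟨⟨hvW, hvR⟩, ⟨hzW, fun hzR ↦ hzB (hRB hzR)⟩, hvz⟩)))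
  · rintro ⟨y, hy⟩
    simp only [sup_adj, edge_adj] at hy
    have := hx.1
    have := hx.2
    refine ⟨y, hy.resolve_right ?_⟩
    grind
  · have hxB : x ∈ N → x ∈ B := fun hxN ↦ by_contra fun hxB ↦ hx ⟨(hN x).1 hxN, hxB⟩
    simp only [Finsupp.add_apply, Finsupp.tsub_apply, Finsupp.single_apply, ones_apply]
    grind
  · have := h.le_two_of_mem_neighborSet hx.1
    have := (hN x).2 hx.1
    simp only [Finsupp.add_apply, Finsupp.tsub_apply, Finsupp.single_apply, ones_apply]
    grind
  all_goals
    simp only [Finsupp.add_apply, Finsupp.tsub_apply, Finsupp.single_apply, ones_apply]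
    grind

end DeleteVertex

section Neighbors

variable (h : Certificate G σ (W \ {v}) (newBoundary G W B v) (R \ {v}) M η) {N Q : Finset V}
  (hN : ∀ x, x ∈ N ↔ (restrict G W).Adj v x) (hRB : R ⊆ B) (hvW : v ∈ W) (hvR : v ∉ R)
  (hσ : ∀ e ∈ G.edgeSet, σ e ≠ 0) (hQ : ∀ x, x ∈ Q ↔ x ∈ N ∧ x ∈ R)

include h hN hRB hvW hvR hσ hQ

lemma Solvable.of_neighbors_mem_roots (hQ₂ : #Q ≤ 2) (hQB : ∀ x ∈ N, x ∈ B → x ∈ Q) :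
    Solvable G σ W B R :=
  .of_coeff_add_ones_add_single h hN hRB hvW hvR hQ₂ hQB <|
    coeff_signedGraphPoly_ne_zero (fun e he ↦ hσ e (edgeSet_mono remaining_le he))
      (fun x ↦ (hN x).trans (h.remaining_adj_self hvR).symm) h.apply_self
      (h.coeff_deleteIncidenceSet_ne_zero rfl) (fun x hx ↦ ((hQ x).1 hx).1)
      fun x hx ↦ h.eq_zero x fun hx' ↦ hx'.2 ⟨((hQ x).1 hx).2, hx'.1.2⟩

lemma Solvable.of_neighbors_eq_or_mem_roots (hQ₁ : #Q ≤ 1) (hwN : w ∈ N) (hwR : w ∉ R)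
    (hQw : ∀ x ∈ N, x ∈ B → x = w ∨ x ∈ Q) : Solvable G σ W B R := by
  have hwQ : w ∉ Q := fun hw ↦ hwR ((hQ w).1 hw).2
  obtain hc | ⟨hηw, z, hz, hc⟩ :=
    coeff_signedGraphPoly_ne_zero_or (fun e he ↦ hσ e (edgeSet_mono remaining_le he))
      (fun x ↦ (hN x).trans (h.remaining_adj_self hvR).symm) h.apply_self
      (h.coeff_deleteIncidenceSet_ne_zero rfl) (fun x hx ↦ ((hQ x).1 hx).1)
      (fun x hx ↦ h.eq_zero x fun hx' ↦ hx'.2 ⟨((hQ x).1 hx).2, hx'.1.2⟩) hwN hwQ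
  · exact .of_coeff_add_ones_add_single h hN hRB hvW hvR (by omega)
      (fun x hxN hxB ↦ Finset.mem_insert.2 (hQw x hxN hxB)) hc
  rw [deleteIncidenceSet_remaining rfl] at hc
  obtain ⟨hzN, hzQ⟩ := Finset.mem_sdiff.1 hz
  have hzB : z ∉ B := fun hzB ↦ hzQ (Finset.mem_insert.2 (hQw z hzN hzB))
  by_cases hzM : z ∈ M.support
  · exact .of_coeff_sub_single_of_mem_support h hN hRB hvW hvR hσ hQ hQw hQ₁ hzN hzB hηw hc hzM
  · exact .of_coeff_sub_single_of_notMem_support h hN hRB hvW hvR hσ hQ hQw hQ₁ hzN hzB hηw hc hzM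

end Neighbors

lemma Solvable.of_delete_vertex (hσ : ∀ e ∈ G.edgeSet, σ e ≠ 0) (hRB : R ⊆ B) (hvW : v ∈ W)
    (hvR : v ∉ R) (h₁ : ((restrict G W).neighborSet v ∩ (B \ R)).ncard ≤ 1)
    (h₂ : ((restrict G W).neighborSet v ∩ B).ncard ≤ 2)
    (h : Solvable G σ (W \ {v}) (newBoundary G W B v) R) : Solvable G σ W B R := by
  classical
  rw [← Set.sdiff_singleton_eq_self hvR] at h
  obtain ⟨M, η, h⟩ := h
  let N : Finset V := {x | (restrict G W).Adj v x}
  let Q : Finset V := {x ∈ N | x ∈ R}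
  have hN : ∀ x, x ∈ N ↔ (restrict G W).Adj v x := fun x ↦ Finset.mem_filter_univ x
  have hQ : ∀ x, x ∈ Q ↔ x ∈ N ∧ x ∈ R := fun x ↦ Finset.mem_filter
  have card_le_two : ∀ P : Finset V, (∀ x ∈ P, x ∈ N ∧ x ∈ B) → #P ≤ 2 := fun P hP ↦ by
    rw [← Set.ncard_coe_finset]
    have hPB : (P : Set V) ⊆ (restrict G W).neighborSet v ∩ B := fun x hx ↦
      ⟨(hN x).1 (hP x hx).1, (hP x hx).2⟩
    exact (Set.ncard_le_ncard hPB).trans h₂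
  have hQB : ∀ x ∈ Q, x ∈ N ∧ x ∈ B := fun x hx ↦ ⟨((hQ x).1 hx).1, hRB ((hQ x).1 hx).2⟩
  by_cases hw : ∃ w ∈ N, w ∈ B \ R
  · obtain ⟨w, hwN, hwB, hwR⟩ := hw
    refine .of_neighbors_eq_or_mem_roots h hN hRB hvW hvR hσ hQ ?_ hwN hwR fun x hxN hxB ↦ ?_
    · have hwQ : w ∉ Q := fun hwQ ↦ hwR ((hQ w).1 hwQ).2
      rw [← Nat.add_le_add_iff_right (n := 1), ← Finset.card_insert_of_notMem hwQ]
      exact card_le_two _ fun x hx ↦ (Finset.mem_insert.1 hx).elim (· ▸ ⟨hwN, hwB⟩) (hQB x)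
    · exact or_iff_not_imp_right.2 fun hxQ ↦ (Set.ncard_le_one).1 h₁ x
        ⟨(hN x).1 hxN, hxB, fun hxR ↦ hxQ ((hQ x).2 ⟨hxN, hxR⟩)⟩ w ⟨(hN w).1 hwN, hwB, hwR⟩
  · push Not at hw
    exact .of_neighbors_mem_roots h hN hRB hvW hvR hσ hQ (card_le_two Q hQB) fun x hxN hxB ↦
      (hQ x).2 ⟨hxN, by_contra fun hxR ↦ hw x hxN ⟨hxB, hxR⟩⟩

lemma Certificate.sup {M₁ M₂ : SimpleGraph V} {η₁ η₂ : V →₀ ℕ} (hSW : S ⊆ W)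
    (hKW : K ⊆ W) (hKS : Disjoint K S) (hRK : Disjoint R K)
    (hK : ∀ x ∈ K, ∀ y ∈ W, G.Adj x y → y ∈ K ∪ S) (h₁ : Certificate G σ (W \ K) (B \ K) R M₁ η₁)
    (h₂ : Certificate G σ (K ∪ S) (B ∩ (K ∪ S)) S M₂ η₂) :
    Certificate G σ W B R (M₁ ⊔ M₂) (η₁ + η₂) := by
  have hM₂ : M₂ ≤ restrict G K := h₂.le.trans (restrict_mono le_rfl (by simp))
  have hη₂ : ∀ x ∉ K, η₂ x = 0 := fun x hx ↦ h₂.eq_zero x fun hx' ↦ hx'.1.elim hx hx'.2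
  have apply_of_mem : ∀ x ∈ K, (η₁ + η₂) x = η₂ x := fun x hx ↦ by
    rw [Finsupp.add_apply, h₁.eq_zero x fun hx' ↦ hx'.1.2 hx, zero_add]
  have apply_of_notMem : ∀ x ∉ K, (η₁ + η₂) x = η₁ x := fun x hx ↦ by
    rw [Finsupp.add_apply, hη₂ x hx, add_zero]
  have notMem_of_adj : ∀ x y, M₁.Adj x y → x ∉ K := fun x y h ↦ (restrict_adj.1 (h₁.le h)).1.1.2
  have mem_of_adj : ∀ x y, M₂.Adj x y → x ∈ K := fun x y h ↦ (restrict_adj.1 (hM₂ h)).1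
  refine ⟨sup_le ?_ ?_, ?_, fun x hx ↦ ?_, fun x ↦ ?_, fun x hx ↦ ?_, ?_, ?_⟩
  · exact h₁.le.trans (restrict_mono le_rfl (Set.sdiff_subset_sdiff_left Set.sdiff_subset))
  · exact hM₂.trans (restrict_mono le_rfl fun x hx ↦ ⟨hKW hx, hRK.notMem_of_mem_right hx⟩)
  · rintro x y z (hy | hy) (hz | hz)
    exacts [h₁.eq_of_adj x y z hy hz, (notMem_of_adj _ _ hy (mem_of_adj _ _ hz)).elim,
      (notMem_of_adj _ _ hz (mem_of_adj _ _ hy)).elim, h₂.eq_of_adj x y z hy hz]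
  · have hxK : x ∉ K := fun hxK ↦ hx ⟨hKW hxK, hRK.notMem_of_mem_right hxK⟩
    rw [apply_of_notMem x hxK]
    exact h₁.eq_zero x fun hx' ↦ hx ⟨hx'.1.1, hx'.2⟩
  · by_cases hxK : x ∈ K
    exacts [apply_of_mem x hxK ▸ h₂.le_three x, apply_of_notMem x hxK ▸ h₁.le_three x]
  · by_cases hxK : x ∈ K
    exacts [apply_of_mem x hxK ▸ h₂.le_two x ⟨hx, .inl hxK⟩,
      apply_of_notMem x hxK ▸ h₁.le_two x ⟨hx, hxK⟩]
  · rintro x hx ⟨y, hxy | hxy⟩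
    · have hxK := notMem_of_adj _ _ hxy
      exact apply_of_notMem x hxK ▸ h₁.le_one x ⟨hx, hxK⟩ ⟨y, hxy⟩
    · have hxK := mem_of_adj _ _ hxy
      exact apply_of_mem x hxK ▸ h₂.le_one x ⟨hx, .inl hxK⟩ ⟨y, hxy⟩
  · rw [remaining_sup hKW hSW hKS hRK hK (h₁.le.trans (restrict_mono le_rfl fun x hx ↦ hx.1.2)) hM₂]
    refine coeff_signedGraphPoly_sup_ne_zero ?_ ?_ h₁.coeff_ne_zero h₂.coeff_ne_zero
    · exact disjoint_remaining
    · rintro x ⟨y, hxy⟩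
      exact hη₂ x (remaining_adj.1 hxy).1.2

lemma Solvable.glue (hSW : S ⊆ W) (hKW : K ⊆ W) (hKS : Disjoint K S)
    (hRK : Disjoint R K) (hK : ∀ x ∈ K, ∀ y ∈ W, G.Adj x y → y ∈ K ∪ S)
    (h₁ : Solvable G σ (W \ K) (B \ K) R) (h₂ : Solvable G σ (K ∪ S) (B ∩ (K ∪ S)) S) :
    Solvable G σ W B R := by
  obtain ⟨M₁, η₁, h₁⟩ := h₁
  obtain ⟨M₂, η₂, h₂⟩ := h₂
  exact ⟨_, _, h₁.sup hSW hKW hKS hRK hK h₂⟩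

end Certificates

/-! ### The induction -/

section Induction

variable {V : Type*} {G Γ : SimpleGraph V} {W B R R' K K' S : Set V} {p q s v x y : V}

/-- The graph `G[W]` with all edges between roots added. -/
def rootedGraph (G : SimpleGraph V) (W R : Set V) : SimpleGraph V := restrict G W ⊔ restrict ⊤ R

@[simp]
lemma rootedGraph_adj : (rootedGraph G W R).Adj x y ↔
    x ∈ W ∧ y ∈ W ∧ G.Adj x y ∨ x ∈ R ∧ y ∈ R ∧ x ≠ y := by
  simp [rootedGraph]

/-- The instances `(W, B, R)` of the induction: a boundary `B` of `G[W]` with at most two roots `R`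
on it, such that the graph remains planar when its roots are joined to each other and all of its
boundary is joined to an apex. -/
structure Admissible (G : SimpleGraph V) (W B R : Set V) : Prop where
  boundary_subset : B ⊆ W
  roots_subset : R ⊆ B
  ncard_roots_le : R.ncard ≤ 2
  isPlanar : (cone (rootedGraph G W R) B).IsPlanar

lemma rootedGraph_sdiff_singleton_le (h : v ∉ R') (hR : R' ⊆ R) :
    rootedGraph G (W \ {v}) R' ≤ (rootedGraph G W R).deleteIncidenceSet v := by
  intro x y hxy
  simp only [deleteIncidenceSet_adj, rootedGraph_adj, Set.mem_sdiff, Set.mem_singleton_iff] at *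
  grind

lemma Admissible.delete_root [Finite V] (h : Admissible G W R R) (hv : v ∈ R ∨ R = ∅) :
    Admissible G (W \ {v}) (newBoundary G W R v) (R \ {v}) where
  boundary_subset _ hx :=
    ⟨hx.1.elim (fun hx ↦ (restrict_adj.1 hx).2.1) fun hx ↦ h.boundary_subset hx, hx.2⟩
  roots_subset _ hx := ⟨.inr hx.1, hx.2⟩
  ncard_roots_le := (Set.ncard_le_ncard Set.sdiff_subset).trans h.ncard_roots_le
  isPlanar := by
    refine isPlanar_cone_mono (isPlanar_cone_neighborSet (v := v) h.isPlanar)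
      (rootedGraph_sdiff_singleton_le (fun h ↦ h.2 rfl) Set.sdiff_subset) ?_
    rintro x ⟨hx | hx, hxv⟩
    · exact Or.inl hx
    · obtain hv | rfl := hv
      exacts [Or.inr (restrict_adj.2 ⟨hv, hx, Ne.symm hxv⟩), hx.elim]

lemma Admissible.delete_vertex (h : Admissible G W B R) (hvB : v ∈ B) (hvR : v ∉ R) :
    Admissible G (W \ {v}) (newBoundary G W B v) R where
  boundary_subset _ hx :=
    ⟨hx.1.elim (fun hx ↦ (restrict_adj.1 hx).2.1) fun hx ↦ h.boundary_subset hx, hx.2⟩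
  roots_subset _ hx := ⟨.inr (h.roots_subset hx), ne_of_mem_of_not_mem hx hvR⟩
  ncard_roots_le := h.ncard_roots_le
  isPlanar := isPlanar_cone_mono (isPlanar_cone_contract h.isPlanar hvB)
    (rootedGraph_sdiff_singleton_le hvR le_rfl)
    (Set.sdiff_subset_sdiff_left (Set.union_subset_union_left _ fun _ hx ↦ Or.inl hx))

lemma Admissible.singleton_root {b : V} (h : Admissible G W B ∅) (hb : b ∈ B) :
    Admissible G W B {b} where
  boundary_subset := h.boundary_subset
  roots_subset := Set.singleton_subset_iff.2 hb
  ncard_roots_le := by simp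
  isPlanar := by
    refine isPlanar_cone_mono h.isPlanar (fun x y hxy ↦ ?_) le_rfl
    simp only [rootedGraph_adj, Set.mem_singleton_iff] at *
    grind

lemma Admissible.sdiff (h : Admissible G W B R) (hRK : Disjoint R K) :
    Admissible G (W \ K) (B \ K) R where
  boundary_subset := Set.sdiff_subset_sdiff_left h.boundary_subset
  roots_subset := Set.subset_sdiff.2 ⟨h.roots_subset, hRK⟩
  ncard_roots_le := h.ncard_roots_le
  isPlanar := isPlanar_cone_mono h.isPlanar
    (sup_le_sup_right (restrict_mono le_rfl Set.sdiff_subset) _) Set.sdiff_subset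

/-- Contracting `K'` realizes the edge between the two new roots. -/
lemma Admissible.union_of_attached [Finite V] (h : Admissible G W B R) (hSB : S ⊆ B)
    (hS : S.ncard ≤ 2) (hKW : K ⊆ W) (hK' : ((rootedGraph G W R).induce K').Connected)
    (hdisj : Disjoint (K ∪ S) K')
    (hadj : ∀ s ∈ S, ((rootedGraph G W R).neighborSet s ∩ K').Nonempty) :
    Admissible G (K ∪ S) (B ∩ (K ∪ S)) S where
  boundary_subset := Set.inter_subset_right
  roots_subset := Set.subset_inter hSB Set.subset_union_right
  ncard_roots_le := hS
  isPlanar := by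
    have hle : restrict G (K ∪ S) ≤ restrict (rootedGraph G W R) K'ᶜ := fun x y hxy ↦ by
      obtain ⟨hx, hy, hxy⟩ := restrict_adj.1 hxy
      have hW : K ∪ S ⊆ W := Set.union_subset hKW (hSB.trans h.boundary_subset)
      exact restrict_adj.2 ⟨hdisj.notMem_of_mem_left hx, hdisj.notMem_of_mem_left hy,
        rootedGraph_adj.2 (.inl ⟨hW hx, hW hy, hxy⟩)⟩
    obtain hS₁ | ⟨u, w, -, rfl⟩ : S.ncard ≤ 1 ∨ ∃ u w, u ≠ w ∧ S = {u, w} := by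
      rw [← Set.ncard_eq_two]
      omega
    · refine isPlanar_cone_mono h.isPlanar (sup_le ?_ fun x y hxy ↦ ?_) Set.inter_subset_left
      · exact fun _ _ hxy ↦ (restrict_adj.1 (hle hxy)).2.2
      · obtain ⟨hx, hy, hne⟩ := restrict_adj.1 hxy
        exact (hne ((Set.ncard_le_one).1 hS₁ x hx y hy)).elim
    · refine isPlanar_cone_mono (isPlanar_cone_restrict_compl_sup_edge h.isPlanar hK' ?_ ?_
        (hadj u (.inl rfl)) (hadj w (.inr rfl))) (sup_le_sup hle fun x y hxy ↦ ?_)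
        fun x hx ↦ ⟨hx.1, hdisj.notMem_of_mem_left hx.2⟩
      · exact hdisj.notMem_of_mem_left (.inr (.inl rfl))
      · exact hdisj.notMem_of_mem_left (.inr (.inr rfl))
      · simp only [restrict_adj, edge_adj, top_adj, Set.mem_insert_iff,
          Set.mem_singleton_iff] at *
        grind

lemma exists_minimal_separation [Finite V] (h : ¬RobustlyConnected Γ W B) :
    ∃ S ⊆ B, S.ncard ≤ 2 ∧
      (∃ p ∈ W \ S, ∃ q ∈ W \ S, ¬(restrict Γ (W \ S)).Reachable p q) ∧
      ∀ s ∈ S, ∀ x ∈ W \ (S \ {s}), ∀ y ∈ W \ (S \ {s}),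
        (restrict Γ (W \ (S \ {s}))).Reachable x y := by
  simp only [RobustlyConnected] at h
  push Not at h
  obtain ⟨S, ⟨hSB, hS, hpq⟩, hmin⟩ := exists_minimal_of_wellFoundedLT
    (fun S ↦ S ⊆ B ∧ S.ncard ≤ 2 ∧ ∃ p ∈ W \ S, ∃ q ∈ W \ S, ¬(restrict Γ (W \ S)).Reachable p q)
    (by simpa using h)
  refine ⟨S, hSB, hS, hpq, fun s hs x hx y hy ↦ by_contra fun hxy ↦ ?_⟩
  have hsub : S \ {s} ⊆ S := Set.sdiff_subset
  exact (hmin ⟨hsub.trans hSB, (Set.ncard_le_ncard hsub).trans hS, x, hx, y, hy, hxy⟩ hsub hs).2 rfl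

lemma neighborSet_inter_comp_nonempty (hp : p ∈ W \ S)
    (hpq : ¬(restrict Γ (W \ S)).Reachable p q)
    (h : (restrict Γ (W \ (S \ {s}))).Reachable p q) :
    (Γ.neighborSet s ∩ comp Γ (W \ S) p).Nonempty := by
  obtain ⟨x, hx, y, hy, hxy⟩ := exists_adj_of_reachable h mem_comp_self hpq
  obtain ⟨-, ⟨hyW, hyS⟩, hyx⟩ := restrict_adj.1 hxy
  obtain rfl : y = s := by_contra fun hys ↦
    hy (mem_comp_of_adj hp hx ⟨hyW, fun hyS' ↦ hyS ⟨hyS', hys⟩⟩ hyx)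
  exact ⟨x, hyx.symm, hx⟩

variable [Fintype V] [LinearOrder V] {σ : Sym2 V → ℤ}

lemma Solvable.empty : Solvable G σ ∅ B R := by
  have hbot : remaining G ∅ R ⊥ = ⊥ := by
    ext x y
    simp
  refine ⟨⊥, 0, bot_le, by simp, by simp, by simp, by simp, by simp, ?_⟩
  rw [hbot, signedGraphPoly, Finset.prod_eq_one] <;> simp

lemma Solvable.of_singleton_root {b : V} (h : Solvable G σ W B {b}) : Solvable G σ W B ∅ := by
  obtain ⟨M, η, h⟩ := h
  have hR : remaining G W ∅ M = remaining G W {b} M := by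
    ext x y
    simp only [remaining_adj, Set.mem_empty_iff_false, Set.mem_singleton_iff]
    grind [G.ne_of_adj]
  refine ⟨M, η, ?_, h.eq_of_adj, fun x hx ↦ h.eq_zero x fun hx' ↦ hx ⟨hx'.1, id⟩, h.le_three,
    h.le_two, h.le_one, hR ▸ h.coeff_ne_zero⟩
  exact h.le.trans (restrict_mono le_rfl fun x hx ↦ ⟨hx.1, id⟩)

section Step

variable (hσ : ∀ e ∈ G.edgeSet, σ e ≠ 0)
  (ih : ∀ W' B' R', W'.ncard < W.ncard → Admissible G W' B' R' → Solvable G σ W' B' R')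

include ih

lemma Admissible.solvable_of_separation (h : Admissible G W B R) (hSB : S ⊆ B) (hS : S.ncard ≤ 2)
    (hp : p ∈ W \ S) (hq : q ∈ W \ S) (hpq : ¬(restrict (rootedGraph G W R) (W \ S)).Reachable p q)
    (hmin : ∀ s ∈ S, (restrict (rootedGraph G W R) (W \ (S \ {s}))).Reachable p q)
    (hR : Disjoint R (comp (rootedGraph G W R) (W \ S) p)) : Solvable G σ W B R := by
  set Γ := rootedGraph G W R
  set K := comp Γ (W \ S) p
  have hK : K ⊆ W \ S := comp_subset hp
  have hKW : K ⊆ W := hK.trans Set.sdiff_subset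
  have hSW : S ⊆ W := hSB.trans h.boundary_subset
  have hpK : p ∈ K := mem_comp_self
  have hqKS : q ∉ K ∪ S := not_or.2 ⟨hpq, hq.2⟩
  have hdisj : Disjoint (K ∪ S) (comp Γ (W \ S) q) := by
    refine Set.disjoint_union_left.2 ⟨?_, ?_⟩
    · exact Set.disjoint_left.2 fun x hx hx' ↦ hpq (hx.trans hx'.symm)
    · exact Set.disjoint_left.2 fun x hx hx' ↦ (comp_subset hq hx').2 hx
  refine .glue hSW hKW (Set.disjoint_sdiff_left.mono_left hK) hR (fun x hx y hy hxy ↦ ?_)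
    (ih _ _ _ ?_ (h.sdiff hR))
    (ih _ _ _ ?_ (h.union_of_attached hSB hS hKW (connected_induce_comp hq) hdisj fun s hs ↦
      neighborSet_inter_comp_nonempty hq (fun hqp ↦ hpq hqp.symm) (hmin s hs).symm))
  · refine or_iff_not_imp_right.2 fun hyS ↦ mem_comp_of_adj hp hx ⟨hy, hyS⟩ ?_
    exact rootedGraph_adj.2 (.inl ⟨hKW hx, hy, hxy⟩)
  · exact Set.ncard_lt_ncard (Set.sdiff_ssubset_left_iff.2 ⟨p, hp.1, hpK⟩)
  · exact Set.ncard_lt_ncard ((Set.union_subset hKW hSW).ssubset_of_mem_notMem hq.1 hqKS)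

lemma Admissible.solvable_of_not_robustlyConnected (h : Admissible G W B R)
    (hW : ¬RobustlyConnected (rootedGraph G W R) W B) : Solvable G σ W B R := by
  obtain ⟨S, hSB, hS, ⟨p, hp, q, hq, hpq⟩, hmin⟩ := exists_minimal_separation hW
  have hmin' (s) (hs : s ∈ S) := hmin s hs p ⟨hp.1, fun h ↦ hp.2 h.1⟩ q ⟨hq.1, fun h ↦ hq.2 h.1⟩
  by_cases hR : Disjoint R (comp (rootedGraph G W R) (W \ S) p)
  · exact h.solvable_of_separation ih hSB hS hp hq hpq hmin' hR
  obtain ⟨r, hr, hpr⟩ := Set.not_disjoint_iff.1 hR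
  refine h.solvable_of_separation ih hSB hS hq hp (fun hqp ↦ hpq hqp.symm)
    (fun s hs ↦ (hmin' s hs).symm) (Set.disjoint_left.2 fun r' hr' hqr' ↦ hpq ?_)
  have hrr' : (restrict (rootedGraph G W R) (W \ S)).Reachable r r' := by
    obtain rfl | hne := eq_or_ne r r'
    · rfl
    · exact Adj.reachable (restrict_adj.2 ⟨comp_subset hp hpr, comp_subset hq hqr',
        rootedGraph_adj.2 (.inr ⟨hr, hr', hne⟩)⟩)
  exact (hpr.trans hrr').trans hqr'.symm

include hσ

lemma Admissible.solvable_of_boundary_eq_roots (h : Admissible G W R R) (hvW : v ∈ W)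
    (hv : v ∈ R ∨ R = ∅) : Solvable G σ W R R :=
  .of_delete_root hσ hvW hv (ih _ _ _ (Set.ncard_sdiff_singleton_lt_of_mem hvW) (h.delete_root hv))

lemma Admissible.solvable_of_roots_nonempty (h : Admissible G W B R) (hR : R.Nonempty) :
    Solvable G σ W B R := by
  by_cases hW : RobustlyConnected (rootedGraph G W R) W B
  swap
  · exact h.solvable_of_not_robustlyConnected ih hW
  obtain hBR | hBR := (B \ R).eq_empty_or_nonempty
  · obtain rfl := h.roots_subset.antisymm (Set.sdiff_eq_empty.1 hBR)
    obtain ⟨r, hr⟩ := hR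
    exact h.solvable_of_boundary_eq_roots hσ ih (h.boundary_subset hr) (.inl hr)
  obtain ⟨v, ⟨hvB, hvR⟩, h₁, h₂⟩ :=
    exists_low_degree h.isPlanar h.boundary_subset h.roots_subset hR hBR hW
  have hle : (restrict G W).neighborSet v ⊆ (rootedGraph G W R).neighborSet v := fun x hx ↦ .inl hx
  have hvW := h.boundary_subset hvB
  exact .of_delete_vertex hσ h.roots_subset hvW hvR
    ((Set.ncard_le_ncard (Set.inter_subset_inter_left _ hle)).trans h₁)
    ((Set.ncard_le_ncard (Set.inter_subset_inter_left _ hle)).trans h₂)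
    (ih _ _ _ (Set.ncard_sdiff_singleton_lt_of_mem hvW) (h.delete_vertex hvB hvR))

end Step

theorem Admissible.solvable (hσ : ∀ e ∈ G.edgeSet, σ e ≠ 0) (h : Admissible G W B R) :
    Solvable G σ W B R := by
  induction hn : W.ncard using Nat.strong_induction_on generalizing W B R with
  | _ n ih =>
  subst hn
  replace ih : ∀ W' B' R', W'.ncard < W.ncard → Admissible G W' B' R' → Solvable G σ W' B' R' :=
    fun _ _ _ hlt h ↦ ih _ hlt h rfl
  obtain rfl | hR := R.eq_empty_or_nonempty
  swap
  · exact h.solvable_of_roots_nonempty hσ ih hR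
  obtain rfl | ⟨b, hb⟩ := B.eq_empty_or_nonempty
  swap
  · exact .of_singleton_root
      ((h.singleton_root hb).solvable_of_roots_nonempty hσ ih (Set.singleton_nonempty b))
  obtain rfl | ⟨v, hv⟩ := W.eq_empty_or_nonempty
  · exact .empty
  · exact h.solvable_of_boundary_eq_roots hσ ih hv (.inr rfl)

end Induction

lemma admissible_univ {V : Type*} {G : SimpleGraph V} (hG : G.IsPlanar) :
    Admissible G Set.univ ∅ ∅ where
  boundary_subset := Set.empty_subset _
  roots_subset := le_rfl
  ncard_roots_le := by simp
  isPlanar := isPlanar_cone_mono (isPlanar_cone_empty hG) (fun x y h ↦ by simpa using h) le_rfl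

end SignedGraph

theorem stmt_16_general {V : Type*} [Fintype V] [LinearOrder V] (G : SimpleGraph V)
    (hG : G.IsPlanar) (σ : Sym2 V → ℤ) (hσ : ∀ e ∈ G.edgeSet, σ e ≠ 0) :
    ∃ M : G.Subgraph, M.IsMatching ∧
      ∃ η : V →₀ ℕ, (∀ v, η v ≤ 3) ∧
        MvPolynomial.coeff η (signedGraphPoly (G.deleteEdges M.edgeSet) σ) ≠ 0 := by
  obtain ⟨M, η, h⟩ := (SignedGraph.admissible_univ hG).solvable hσ
  have hMG : M ≤ G := fun x y hxy ↦ (SignedGraph.restrict_adj.1 (h.le hxy)).2.2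
  refine ⟨(SimpleGraph.toSubgraph M hMG).induce M.support, fun x ⟨y, hxy⟩ ↦ ?_, η, h.le_three, ?_⟩
  · exact ⟨y, ⟨⟨y, hxy⟩, ⟨x, hxy.symm⟩, hxy⟩, fun z hxz ↦ h.eq_of_adj x z y hxz.2.2 hxy⟩
  · convert h.coeff_ne_zero using 3
    ext x y
    simpa using fun _ ↦ ⟨fun h hxy ↦ h ⟨y, hxy⟩ ⟨x, hxy.symm⟩ hxy, fun h _ _ ↦ h⟩

/- Every signed planar graph `(G, σ)` contains a matching `M` with
`AT((G - M, σ)) ≤ 4`. -/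
theorem stmt_16 {V : Type*} [Fintype V] [LinearOrder V] (G : SimpleGraph V)
    (hG : G.IsPlanar) (σ : Sym2 V → ℤ) (hσ : ∀ e, σ e = 1 ∨ σ e = -1) :
    ∃ M : G.Subgraph, M.IsMatching ∧
      ∃ η : V →₀ ℕ, (∀ v, η v ≤ 3) ∧
        MvPolynomial.coeff η (signedGraphPoly (G.deleteEdges M.edgeSet) σ) ≠ 0 :=
  stmt_16_general G hG σ fun e _ ↦ by obtain h | h := hσ e <;> simp [h]
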